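/- arXiv:1509.02104 — 12 statements merged into one kernel-verified Lean document; each statement's English description precedes it below -/
import Mathlib

section
/- There is no finite group that has exactly two cyclic subgroups of order 6. -/
theorem aux_gen {G : Type} [Group G] (x w : G) (hx : orderOf x = 6) (hw : orderOf w = 6)
    (h : w ∈ Subgroup.zpowers x) : w = x ∨ w = x⁻¹ := by
  classical
  have hfin : IsOfFinOrder x := by
    rw [← orderOf_pos_iff]; omega
  obtain ⟨n, hn⟩ := (hfin.mem_zpowers_iff_mem_range_orderOf (y := w)).1 h |> Finset.mem_image.1
  obtain ⟨hn, rfl⟩ := hn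
  rw [hx, Finset.mem_range] at hn
  have h6 : x ^ 6 = 1 := by rw [← hx]; exact pow_orderOf_eq_one x
  rw [hfin.orderOf_pow, hx] at hw
  interval_cases n <;> simp at hw ⊢
  right
  rw [eq_inv_iff_mul_eq_one, ← pow_succ, h6]

theorem aux_ord {G : Type} [Group G] (z : G) (h6 : z ^ 6 = 1) (h3 : z ^ 3 ≠ 1) (h2 : z ^ 2 ≠ 1) :
    orderOf z = 6 := by
  have hd := orderOf_dvd_of_pow_eq_one h6
  have hle := Nat.le_of_dvd (by norm_num) hd
  have a2 : ¬ orderOf z ∣ 2 := fun h => h2 (orderOf_dvd_iff_pow_eq_one.1 h)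
  have a3 : ¬ orderOf z ∣ 3 := fun h => h3 (orderOf_dvd_iff_pow_eq_one.1 h)
  generalize orderOf z = n at *
  interval_cases n <;> simp_all

theorem aux_comm {G : Type} [Group G] (x y : G) (hx : x ^ 6 = 1) (hy : y ^ 6 = 1)
    (hxy : x * y * x⁻¹ = y ∨ x * y * x⁻¹ = y⁻¹) (hyx : y * x * y⁻¹ = x ∨ y * x * y⁻¹ = x⁻¹) :
    Commute x y := by
  rcases hxy with h | h
  · exact mul_inv_eq_iff_eq_mul.1 h
  rcases hyx with h' | h'
  · exact (show Commute y x from mul_inv_eq_iff_eq_mul.1 h').symm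
  -- x commutes with y^3 and y^2
  have e3 : Commute x (y ^ 3) := by
    have : x * y ^ 3 * x⁻¹ = y ^ 3 := by
      rw [← conj_pow, h, inv_pow, inv_eq_iff_mul_eq_one, ← pow_add, hy]
    exact mul_inv_eq_iff_eq_mul.1 this
  have e2 : Commute (y ^ 2) x := by
    have : y ^ 2 * x * (y ^ 2)⁻¹ = x := by
      calc y ^ 2 * x * (y ^ 2)⁻¹ = y * (y * x * y⁻¹) * y⁻¹ := by
              simp only [pow_two, mul_inv_rev, mul_assoc]
        _ = y * x⁻¹ * y⁻¹ := by rw [h']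
        _ = (y * x * y⁻¹)⁻¹ := by group
        _ = x := by rw [h', inv_inv]
    exact mul_inv_eq_iff_eq_mul.1 this
  have : y = y ^ 3 * (y ^ 2)⁻¹ := by group
  rw [this]
  exact e3.mul_right e2.symm.inv_right

theorem aux_main {G : Type} [Group G] (x y : G) (hx : orderOf x = 6) (hy : orderOf y = 6)
    (h1 : x ≠ y) (h2 : x ≠ y⁻¹)
    (S : ∀ z : G, orderOf z = 6 → z = x ∨ z = x⁻¹ ∨ z = y ∨ z = y⁻¹) : False := by
  have x6 : x ^ 6 = 1 := by rw [← hx]; exact pow_orderOf_eq_one x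
  have y6 : y ^ 6 = 1 := by rw [← hy]; exact pow_orderOf_eq_one y
  have np : ∀ (z : G), orderOf z = 6 → z ^ 2 ≠ 1 ∧ z ^ 3 ≠ 1 ∧ z ^ 4 ≠ 1 := by
    intro z hz
    refine ⟨?_, ?_, ?_⟩ <;>
    · intro h
      have := orderOf_dvd_of_pow_eq_one h
      rw [hz] at this
      revert this; decide
  obtain ⟨x2, x3, x4⟩ := np x hx
  obtain ⟨y2, y3, y4⟩ := np y hy
  have oc : ∀ a b : G, orderOf (a * b * a⁻¹) = orderOf b := by
    intro a b
    exact (MulAut.conj a).orderOf_eq b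
  have hc : Commute x y := by
    apply aux_comm x y x6 y6
    · rcases S _ ((oc x y).trans hy) with h | h | h | h
      · exact absurd (by simpa [mul_inv_eq_iff_eq_mul] using h : y = x).symm h1
      · exfalso; apply h2
        have : y = x⁻¹ := by simpa [mul_assoc] using congrArg (fun t => x⁻¹ * t * x) h
        rw [this, inv_inv]
      · exact Or.inl h
      · exact Or.inr h
    · rcases S _ ((oc y x).trans hx) with h | h | h | h
      · exact Or.inl h
      · exact Or.inr h
      · exact absurd (by simpa [mul_inv_eq_iff_eq_mul] using h : x = y) h1
      · exfalso; apply h2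
        simpa [mul_assoc] using congrArg (fun t => y⁻¹ * t * y) h
  have xi3 : (x⁻¹) ^ 3 = x ^ 3 := by
    rw [inv_pow, inv_eq_iff_mul_eq_one, ← pow_add, x6]
  have yi3 : (y⁻¹) ^ 3 = y ^ 3 := by
    rw [inv_pow, inv_eq_iff_mul_eq_one, ← pow_add, y6]
  have y9 : y ^ 9 = y ^ 3 := by
    rw [show 9 = 6 + 3 from rfl, pow_add, y6, one_mul]
  by_cases hne : x ^ 3 = y ^ 3
  · have e3 : (x * y ^ 4) ^ 3 = x ^ 3 := by
      rw [(hc.pow_right 4).mul_pow, ← pow_mul, show 4 * 3 = 6 * 2 from rfl, pow_mul, y6, one_pow,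
        mul_one]
    have e2 : (x * y ^ 4) ^ 2 = x ^ 2 * y ^ 2 := by
      rw [(hc.pow_right 4).mul_pow, ← pow_mul, show 4 * 2 = 6 + 2 from rfl, pow_add, y6, one_mul]
    have yi : y ^ 4 * y ^ 2 = 1 := by rw [← pow_add, y6]
    have y5 : y ^ 4 * y = 1 * y⁻¹ := by
      rw [eq_mul_inv_iff_mul_eq, ← pow_succ, ← pow_succ, y6]
    have oz : orderOf (x * y ^ 4) = 6 := by
      apply aux_ord
      · rw [show 6 = 3 * 2 from rfl, pow_mul, e3, ← pow_mul, x6]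
      · rwa [e3]
      · rw [e2]
        intro h
        apply h2
        have : x ^ 2 = (y ^ 2)⁻¹ := mul_eq_one_iff_eq_inv.1 h
        calc x = (x ^ 2)⁻¹ * x ^ 3 := by group
          _ = y ^ 2 * (y⁻¹) ^ 3 := by rw [this, hne, yi3, inv_inv]
          _ = y⁻¹ := by group
    rcases S _ oz with h | h | h | h
    · exact y4 (by simpa using h)
    · apply h1
      have hh : x * x = y ^ 2 := by
        have : y ^ 4 = x⁻¹ * x⁻¹ := by
          rw [eq_inv_mul_iff_mul_eq, h]
        rw [this] at yi
        have := congrArg (fun t => x * x * t) yi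
        simp only [mul_one] at this
        rw [← this]; group
      calc x = (x * x)⁻¹ * x ^ 3 := by group
          _ = y := by rw [hh, hne]; group
    · have : x = (y⁻¹) ^ 3 := by
        calc x = (x * y ^ 4) * (y ^ 4)⁻¹ := by group
          _ = (y⁻¹) ^ 3 := by rw [h]; group
      apply x2
      rw [this, yi3, ← pow_mul, y6]
    · apply h1
      calc x = (x * y ^ 4) * (y ^ 4)⁻¹ := by group
          _ = y * (y ^ 6)⁻¹ := by rw [h]; group
          _ = y := by rw [y6]; group
  · have e3 : (x * y ^ 3) ^ 3 = x ^ 3 * y ^ 3 := by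
      rw [(hc.pow_right 3).mul_pow, ← pow_mul, y9]
    have e2 : (x * y ^ 3) ^ 2 = x ^ 2 := by
      rw [(hc.pow_right 3).mul_pow, ← pow_mul, y6, mul_one]
    have oz : orderOf (x * y ^ 3) = 6 := by
      apply aux_ord
      · rw [show 6 = 2 * 3 from rfl, pow_mul, e2, ← pow_mul, x6]
      · rw [e3]
        intro h
        apply hne
        rw [mul_eq_one_iff_eq_inv.1 h, ← inv_pow, yi3]
      · rwa [e2]
    rcases S _ oz with h | h | h | h <;> rw [h] at e3
    · exact y3 (by simpa using e3)
    · rw [xi3] at e3; exact y3 (by simpa using e3)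
    · exact x3 (by simpa using e3)
    · rw [yi3] at e3; exact x3 (by simpa using e3)

/-- There is no finite group that has exactly two cyclic subgroups of order 6. -/
theorem no_group_with_exactly_two_cyclic_subgroups_of_order_six :
    ∀ (G : Type) [Group G] [Finite G],
      {H : Subgroup G | IsCyclic H ∧ Nat.card H = 6}.ncard ≠ 2 := by
  intro G _ _ h
  obtain ⟨A, B, hAB, hS⟩ := Set.ncard_eq_two.1 h
  have gen : ∀ H : Subgroup G, H ∈ ({A, B} : Set (Subgroup G)) →
      ∃ x : G, Subgroup.zpowers x = H ∧ orderOf x = 6 := by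
    intro H hH
    rw [← hS] at hH
    obtain ⟨hc, h6⟩ := hH
    obtain ⟨x, hx⟩ := (Subgroup.isCyclic_iff_exists_zpowers_eq_top H).1 hc
    exact ⟨x, hx, by rw [← Nat.card_zpowers, hx, h6]⟩
  obtain ⟨x, hxA, hx⟩ := gen A (by simp)
  obtain ⟨y, hyB, hy⟩ := gen B (by simp)
  refine aux_main x y hx hy ?_ ?_ ?_
  · rintro rfl
    exact hAB (hxA.symm.trans hyB)
  · rintro rfl
    rw [Subgroup.zpowers_inv] at hxA
    exact hAB (hxA.symm.trans hyB)
  · intro z hz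
    have : Subgroup.zpowers z ∈ ({A, B} : Set (Subgroup G)) := by
      rw [← hS]
      exact ⟨inferInstance, by rw [Nat.card_zpowers, hz]⟩
    have hm := Subgroup.mem_zpowers z
    rcases this with h | h
    · rw [h, ← hxA] at hm
      rcases aux_gen x z hx hz hm with h | h <;> simp [h]
    · rw [h, ← hyB] at hm
      rcases aux_gen y z hy hz hm with h | h <;> simp [h]
end

section
/- No finite group of order 12, 18, or 36 has exactly four elements of order 6. -/
theorem order_six_of {G : Type} [Group G] {g : G} (h6 : g ^ 6 = 1) (h2 : g ^ 2 ≠ 1)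
    (h3 : g ^ 3 ≠ 1) : orderOf g = 6 := by
  have hd : orderOf g ∣ 6 := orderOf_dvd_of_pow_eq_one h6
  have n2 : ¬ orderOf g ∣ 2 := fun h => h2 (orderOf_dvd_iff_pow_eq_one.1 h)
  have n3 : ¬ orderOf g ∣ 3 := fun h => h3 (orderOf_dvd_iff_pow_eq_one.1 h)
  have hle := Nat.le_of_dvd (by norm_num) hd
  generalize orderOf g = n at *
  interval_cases n <;> revert hd n2 n3 <;> decide

theorem pow_facts {G : Type} [Group G] {g : G} (h : orderOf g = 6) :
    g ^ 6 = 1 ∧ g ^ 2 ≠ 1 ∧ g ^ 3 ≠ 1 := by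
  refine ⟨h ▸ pow_orderOf_eq_one g, fun h' => ?_, fun h' => ?_⟩
  · have := orderOf_dvd_of_pow_eq_one h'
    rw [h] at this
    revert this; decide
  · have := orderOf_dvd_of_pow_eq_one h'
    rw [h] at this
    revert this; decide

theorem core {G : Type} [Group G] (a b : G) (ha : orderOf a = 6) (hb : orderOf b = 6)
    (hab : b ≠ a) (hab' : b ≠ a⁻¹)
    (H : ∀ g : G, orderOf g = 6 → g = a ∨ g = a⁻¹ ∨ g = b ∨ g = b⁻¹) : False := by
  obtain ⟨a6, a2, a3⟩ := pow_facts ha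
  obtain ⟨b6, b2, b3⟩ := pow_facts hb
  have hc : a * b * a⁻¹ = b ∨ a * b * a⁻¹ = b⁻¹ := by
    have ho : orderOf (a * b * a⁻¹) = 6 := by
      rw [← hb]; exact (MulAut.conj a).orderOf_eq b
    rcases H _ ho with h | h | h | h
    · exact absurd (mul_left_cancel (mul_inv_eq_iff_eq_mul.1 h)) hab
    · refine absurd ?_ hab'
      have : a * b = 1 := by simpa using h
      exact (inv_eq_of_mul_eq_one_right this).symm
    · exact Or.inl h
    · exact Or.inr h
  have binv : (b ^ 3)⁻¹ = b ^ 3 := by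
    apply inv_eq_of_mul_eq_one_right
    rw [← pow_add]; exact b6
  have c3 : Commute a (b ^ 3) := by
    have : a * b ^ 3 * a⁻¹ = b ^ 3 := by
      rw [← conj_pow]
      rcases hc with h | h
      · rw [h]
      · rw [h, inv_pow, binv]
    exact mul_inv_eq_iff_eq_mul.1 this
  have c2 : Commute (a ^ 2) b := by
    have : a * (a * b * a⁻¹) * a⁻¹ = b := by
      rcases hc with h | h
      · rw [h, h]
      · rw [h, ← conj_inv, h, inv_inv]
    have h' : a ^ 2 * b * (a ^ 2)⁻¹ = b := by
      simp only [pow_two, mul_inv_rev, mul_assoc] at this ⊢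
      exact this
    exact mul_inv_eq_iff_eq_mul.1 h'
  by_cases hz : a ^ 3 = b ^ 3
  · have cab : Commute a b := by
      have h1 : Commute (a ^ 3) b := by rw [hz]; exact Commute.pow_self b 3
      have h2 : Commute (a ^ 3 * (a ^ 2)⁻¹) b := h1.mul_left c2.inv_left
      have : a ^ 3 * (a ^ 2)⁻¹ = a := by group
      rwa [this] at h2
    have hg : orderOf (a⁻¹ * b ^ 2) = 6 := by
      have cc : Commute a⁻¹ (b ^ 2) := (cab.pow_right 2).inv_left
      apply order_six_of
      · rw [cc.mul_pow, inv_pow, a6, ← pow_mul, pow_mul b 6 2, b6]; simp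
      · rw [cc.mul_pow, inv_pow, ← pow_mul]
        intro h
        have h' : b ^ 4 = a ^ 2 := (inv_mul_eq_one.1 h).symm
        apply hab'
        have : b * a = 1 := by
          calc b * a = b ^ 6 * b * a := by rw [b6, one_mul]
            _ = b ^ 4 * b ^ 3 * a := by group
            _ = a ^ 6 := by rw [h', ← hz]; group
            _ = 1 := a6
        exact eq_inv_of_mul_eq_one_left this
      · rw [cc.mul_pow, inv_pow, ← pow_mul, b6, mul_one]
        simpa using a3
    rcases H _ hg with h | h | h | h
    · have h' : b ^ 2 = a ^ 2 := by rw [inv_mul_eq_iff_eq_mul] at h; rw [h, pow_two]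
      apply hab
      have : b ^ 2 * b = a ^ 2 * a := by rw [← pow_succ, ← pow_succ]; exact hz.symm
      rw [h'] at this
      exact mul_left_cancel this
    · exact b2 (by simpa using h)
    · rw [inv_mul_eq_iff_eq_mul, pow_two] at h
      exact hab (mul_right_cancel h)
    · rw [inv_mul_eq_iff_eq_mul, eq_mul_inv_iff_mul_eq, ← pow_succ] at h
      apply a2
      rw [← h, ← pow_mul]; exact b6
  · have cc : Commute (b ^ 3) a⁻¹ := c3.symm.inv_right
    have g3 : (b ^ 3 * a⁻¹) ^ 3 = b ^ 3 * (a ^ 3)⁻¹ := by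
      rw [cc.mul_pow, inv_pow, ← pow_mul, show 3 * 3 = 6 + 3 from rfl, pow_add, b6, one_mul]
    have ainv : (a ^ 3)⁻¹ = a ^ 3 := by
      apply inv_eq_of_mul_eq_one_right
      rw [← pow_add]; exact a6
    have hg : orderOf (b ^ 3 * a⁻¹) = 6 := by
      apply order_six_of
      · rw [cc.mul_pow, inv_pow, a6, ← pow_mul, mul_comm 3 6, pow_mul, b6]; simp
      · rw [cc.mul_pow, inv_pow, ← pow_mul, b6, one_mul]; simpa using a2
      · rw [g3]; intro h; exact hz (mul_inv_eq_one.1 h).symm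
    rw [ainv] at g3
    rcases H _ hg with h | h | h | h <;> rw [h] at g3
    · exact b3 (by simpa using g3)
    · rw [inv_pow, ainv] at g3; exact b3 (by simpa using g3)
    · exact a3 (by simpa using g3)
    · rw [inv_pow, binv] at g3; exact a3 (by simpa using g3)

/-- No finite group of order 12, 18, or 36 has exactly four elements of order 6. -/
theorem no_group_of_order_12_18_36_with_four_elements_of_order_six
    (G : Type) [Group G] [Finite G]
    (hcard : Nat.card G = 12 ∨ Nat.card G = 18 ∨ Nat.card G = 36) :
    {g : G | orderOf g = 6}.ncard ≠ 4 := by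
  intro h4
  set S : Set G := {g : G | orderOf g = 6} with hS
  obtain ⟨a, ha⟩ : S.Nonempty := Set.nonempty_of_ncard_ne_zero (by omega)
  have hne : ∀ g ∈ S, g ≠ g⁻¹ := by
    intro g hg h
    apply (pow_facts hg).2.1
    rw [pow_two]; nth_rewrite 1 [h]; simp
  have hinv : ∀ g ∈ S, g⁻¹ ∈ S := by
    intro g hg
    change orderOf g⁻¹ = 6
    rw [orderOf_inv]; exact hg
  obtain ⟨b, hb, hba⟩ : ∃ b ∈ S, b ∉ ({a, a⁻¹} : Set G) := by
    refine Set.exists_mem_notMem_of_ncard_lt_ncard ?_ (Set.toFinite _)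
    rw [Set.ncard_pair (hne a ha)]; omega
  simp only [Set.mem_insert_iff, Set.mem_singleton_iff, not_or] at hba
  have hsub : ({a, a⁻¹, b, b⁻¹} : Set G) ⊆ S := by
    rintro x (rfl | rfl | rfl | rfl)
    · exact ha
    · exact hinv _ ha
    · exact hb
    · exact hinv _ hb
  have hc : ({a, a⁻¹, b, b⁻¹} : Set G).ncard = 4 := by
    have n1 : a ≠ b⁻¹ := fun h => hba.2 (by rw [h, inv_inv])
    rw [Set.ncard_insert_of_notMem, Set.ncard_insert_of_notMem, Set.ncard_pair (hne b hb)]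
    · simp only [Set.mem_insert_iff, Set.mem_singleton_iff, not_or]
      exact ⟨fun h => hba.2 h.symm, fun h => hba.1 (inv_injective h).symm⟩
    · simp only [Set.mem_insert_iff, Set.mem_singleton_iff, not_or]
      exact ⟨hne a ha, fun h => hba.1 h.symm, n1⟩
  have heq := Set.eq_of_subset_of_ncard_le hsub (by omega)
  refine core a b ha hb hba.1 hba.2 fun g hg => ?_
  have : g ∈ ({a, a⁻¹, b, b⁻¹} : Set G) := by rw [heq]; exact hg
  simpa using this
end

section
/- Let G be a finite group with π_e(G) ⊆ {1,2,3,4,6} which has exactly three cyclic subgroups of order 6. If there exist two cyclic subgroups of order 6 of G whose intersection has order 3, then the intersection of any two distinct cyclic subgroups of order 6 of G has order 3. -/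
theorem aux_uniq {G : Type} [Group G] [Finite G] (H : Subgroup G) (hc : IsCyclic H)
    (h6 : Nat.card H = 6) {a d : G} (ha : a ∈ H) (hd : d ∈ H) (oa : orderOf a = 2)
    (od : orderOf d = 2) : a = d := by
  classical
  haveI := Fintype.ofFinite H
  have h := IsCyclic.card_orderOf_eq_totient (α := H) (d := 2)
    (by rw [← Nat.card_eq_fintype_card, h6]; norm_num)
  have h1 : Nat.totient 2 = 1 := by decide
  rw [h1, Finset.card_eq_one] at h
  obtain ⟨x, hx⟩ := h
  have e1 : (⟨a, ha⟩ : H) ∈ ({x} : Finset H) := by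
    rw [← hx]; simp only [Finset.mem_filter, Finset.mem_univ, true_and]; rw [← Subgroup.orderOf_coe]; exact oa
  have e2 : (⟨d, hd⟩ : H) ∈ ({x} : Finset H) := by
    rw [← hx]; simp only [Finset.mem_filter, Finset.mem_univ, true_and]; rw [← Subgroup.orderOf_coe]; exact od
  rw [Finset.mem_singleton] at e1 e2
  exact congrArg Subtype.val (e1.trans e2.symm)

theorem aux_card {G : Type} [Group G] [Finite G] {a c : G} (h : Commute a c)
    (oa : orderOf a = 2) (oc : orderOf c = 3) :
    Nat.card (Subgroup.zpowers (a * c)) = 6 ∧ a ∈ Subgroup.zpowers (a * c) ∧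
      c ∈ Subgroup.zpowers (a * c) := by
  have a2 : a ^ 2 = 1 := oa ▸ pow_orderOf_eq_one a
  have c3 : c ^ 3 = 1 := oc ▸ pow_orderOf_eq_one c
  refine ⟨?_, ?_, ?_⟩
  · rw [Nat.card_zpowers, h.orderOf_mul_eq_mul_orderOf_of_coprime (by rw [oa, oc]; decide), oa, oc]
  · have : (a * c) ^ 3 = a := by
      rw [h.mul_pow, c3, pow_succ, a2]; simp
    exact Subgroup.mem_zpowers_iff.2 ⟨3, by exact_mod_cast this⟩
  · have : (a * c) ^ 4 = c := by
      rw [h.mul_pow, show a ^ 4 = (a ^ 2) ^ 2 by rw [← pow_mul], a2, pow_succ c, c3]; simp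
    exact Subgroup.mem_zpowers_iff.2 ⟨4, by exact_mod_cast this⟩

theorem aux_comm_s3 {G : Type} [Group G] (H : Subgroup G) (hc : IsCyclic H) {a c : G}
    (ha : a ∈ H) (hcH : c ∈ H) : Commute a c := by
  letI := hc.commGroup
  exact congrArg Subtype.val (mul_comm (⟨a, ha⟩ : H) ⟨c, hcH⟩)

theorem aux_eq {G : Type} [Group G] [Finite G] (H : Subgroup G) (hc : IsCyclic H)
    (h6 : Nat.card H = 6) {a c : G} (ha : a ∈ H) (hcH : c ∈ H) (oa : orderOf a = 2)
    (oc : orderOf c = 3) : Subgroup.zpowers (a * c) = H := by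
  refine Subgroup.eq_of_le_of_card_ge ?_ ?_
  · rw [Subgroup.zpowers_le]; exact H.mul_mem ha hcH
  · rw [h6, (aux_card (aux_comm_s3 H hc ha hcH) oa oc).1]

theorem aux_inv {G : Type} [Group G] (H : Subgroup G) [Finite G] (h6 : Nat.card H = 6) :
    ∃ a ∈ H, orderOf a = 2 := by
  haveI : Fact (Nat.Prime 2) := ⟨Nat.prime_two⟩
  obtain ⟨x, hx⟩ := exists_prime_orderOf_dvd_card' (G := H) 2 (by rw [h6]; norm_num)
  exact ⟨x, x.2, by rw [Subgroup.orderOf_coe, hx]⟩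

theorem aux_third {G : Type} [Group G] {a b c : G} (ha : Commute a c) (hb : Commute b c)
    (oa : orderOf a = 2) (ob : orderOf b = 2) (hab : a ≠ b) :
    ∃ d, Commute d c ∧ orderOf d = 2 ∧ d ≠ a ∧ d ≠ b := by
  obtain ⟨a2, a1⟩ := orderOf_eq_prime_iff.1 oa
  obtain ⟨b2, b1⟩ := orderOf_eq_prime_iff.1 ob
  have aa : a * a = 1 := by rw [← pow_two, a2]
  have bb : b * b = 1 := by rw [← pow_two, b2]
  have hne : a * b ≠ 1 := fun h => hab (mul_right_cancel (h.trans bb.symm))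
  by_cases h : a * b = b * a
  · refine ⟨a * b, ha.mul_left hb, orderOf_eq_prime_iff.2 ⟨?_, hne⟩, ?_, ?_⟩
    · rw [(show Commute a b from h).mul_pow, a2, b2, one_mul]
    · simpa using b1
    · simpa using a1
  · refine ⟨a * b * a, (ha.mul_left hb).mul_left ha, orderOf_eq_prime_iff.2 ⟨?_, ?_⟩, ?_, ?_⟩
    · rw [pow_two, show a * b * a * (a * b * a) = a * (b * (a * a) * b) * a by group, aa, mul_one,
        bb, mul_one, aa]
    · intro h1
      exact b1 (mul_left_cancel ((mul_right_cancel (h1.trans aa.symm)).trans (mul_one a).symm))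
    · simpa using hne
    · intro h1
      apply h
      have := congrArg (· * a) h1
      simpa [mul_assoc, aa] using this

/-- Let `G` be a finite group with `π_e(G) ⊆ {1,2,3,4,6}` which has exactly three cyclic
subgroups of order 6. If there exist two cyclic subgroups of order 6 of `G` whose
intersection has order 3, then the intersection of any two distinct cyclic subgroups of
order 6 of `G` has order 3. -/
theorem intersections_of_cyclic_subgroups_of_order_six
    (G : Type) [Group G] [Finite G]
    (horders : ∀ g : G, orderOf g ∈ ({1, 2, 3, 4, 6} : Set ℕ))
    (hthree : {H : Subgroup G | IsCyclic H ∧ Nat.card H = 6}.ncard = 3)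
    (hexists : ∃ H K : Subgroup G, IsCyclic H ∧ Nat.card H = 6 ∧ IsCyclic K ∧
      Nat.card K = 6 ∧ H ≠ K ∧ Nat.card (H ⊓ K : Subgroup G) = 3) :
    ∀ H K : Subgroup G, IsCyclic H → Nat.card H = 6 → IsCyclic K → Nat.card K = 6 →
      H ≠ K → Nat.card (H ⊓ K : Subgroup G) = 3 := by
  obtain ⟨H, K, hH, h6, hK, k6, hne, h3⟩ := hexists
  haveI : Fact (Nat.Prime 3) := ⟨Nat.prime_three⟩
  obtain ⟨c, oc⟩ := exists_prime_orderOf_dvd_card' (G := (H ⊓ K : Subgroup G)) 3 (by rw [h3])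
  obtain ⟨c, hcH, hcK⟩ := c
  rw [← Subgroup.orderOf_coe] at oc
  simp only at oc
  obtain ⟨a, ha, oa⟩ := aux_inv H h6
  obtain ⟨b, hb, ob⟩ := aux_inv K k6
  have hab : a ≠ b := by
    rintro rfl
    exact hne ((aux_eq H hH h6 ha hcH oa oc).symm.trans (aux_eq K hK k6 hb hcK ob oc))
  obtain ⟨d, hd, od, hda, hdb⟩ := aux_third (aux_comm_s3 H hH ha hcH) (aux_comm_s3 K hK hb hcK) oa ob hab
  obtain ⟨l6, hdL, hcL⟩ := aux_card hd od oc
  set L := Subgroup.zpowers (d * c) with hL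
  have hLc : IsCyclic L := by rw [hL]; infer_instance
  have hHL : H ≠ L := fun e => hda (aux_uniq L hLc l6 hdL (e ▸ ha) od oa)
  have hKL : K ≠ L := fun e => hdb (aux_uniq L hLc l6 hdL (e ▸ hb) od ob)
  have hset : ({H, K, L} : Set (Subgroup G)) = {H : Subgroup G | IsCyclic H ∧ Nat.card H = 6} := by
    apply Set.eq_of_subset_of_ncard_le
    · rintro x (rfl | rfl | rfl)
      exacts [⟨hH, h6⟩, ⟨hK, k6⟩, ⟨hLc, l6⟩]
    · rw [hthree, Set.ncard_eq_three.2 ⟨H, K, L, hne, hHL, hKL, rfl⟩]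
    · exact Set.toFinite _
  have key : ∀ M : Subgroup G, IsCyclic M → Nat.card M = 6 → c ∈ M := by
    intro M hM m6
    have : M ∈ ({H, K, L} : Set (Subgroup G)) := by rw [hset]; exact ⟨hM, m6⟩
    rcases this with rfl | rfl | rfl
    exacts [hcH, hcK, hcL]
  intro M N hM m6 hN n6 hMN
  have d3 : 3 ∣ Nat.card (M ⊓ N : Subgroup G) := by
    rw [← oc]
    exact Subgroup.orderOf_dvd_natCard _ ⟨key M hM m6, key N hN n6⟩
  have d6 : Nat.card (M ⊓ N : Subgroup G) ∣ 6 := m6 ▸ Subgroup.card_dvd_of_le inf_le_left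
  have hn6 : Nat.card (M ⊓ N : Subgroup G) ≠ 6 := by
    intro h
    exact hMN ((Subgroup.eq_of_le_of_card_ge inf_le_left (by rw [h, m6])).symm.trans
      (Subgroup.eq_of_le_of_card_ge inf_le_right (by rw [h, n6])))
  have hle := Nat.le_of_dvd (by norm_num) d6
  have hpos : 0 < Nat.card (M ⊓ N : Subgroup G) := Nat.card_pos
  omega
end

section
/- Let G be a finite group with π_e(G) ⊆ {1,2,3,4,6} which has exactly three cyclic subgroups of order 6, and suppose two of these cyclic subgroups of order 6 intersect in a subgroup of order 3. Then G is isomorphic to one of the following: Z_2 × Z_6; Z_3 × S_3; Z_2 × Dic_3 (where Dic_3 is the dicyclic group of order 12, i.e. Z_3 ⋊ Z_4); a semidirect product (Z_6 × Z_2) ⋊_φ Z_2 for some action φ of Z_2 on Z_6 × Z_2; Z_2 × Z_2 × S_3; Z_3 × A_4; or a semidirect product (Z_3 × A_4) ⋊_φ Z_2 for some action φ of Z_2 on Z_3 × A_4. -/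
section helpers
variable {G : Type} [Group G]

theorem zhom (n : ℕ) (a : G) (h : orderOf a = n) :
    ∃ f : Multiplicative (ZMod n) →* G, f (Multiplicative.ofAdd 1) = a ∧ Function.Injective f ∧
      f.range = Subgroup.zpowers a := by
  subst h
  let f := AddMonoidHom.toMultiplicativeLeft
    (ZMod.lift (orderOf a) ⟨zmultiplesHom (Additive G) (Additive.ofMul a), by
      show _ = Additive.ofMul (1 : G)
      simp [← ofMul_pow, pow_orderOf_eq_one]⟩)
  have hf : ∀ k : ℤ, f (Multiplicative.ofAdd (k : ZMod (orderOf a))) = a ^ k := by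
    intro k
    simp [f]
  refine ⟨f, ?_, ?_, ?_⟩
  · simpa using hf 1
  · rw [injective_iff_map_eq_one]
    intro x hx
    induction x using Multiplicative.rec with | _ x
    obtain ⟨k, rfl⟩ := ZMod.intCast_surjective x
    rw [hf] at hx
    rw [← orderOf_dvd_iff_zpow_eq_one] at hx
    rw [(ZMod.intCast_zmod_eq_zero_iff_dvd k _).2 hx]
    rfl
  · ext y
    simp only [MonoidHom.mem_range, Subgroup.mem_zpowers_iff]
    constructor
    · rintro ⟨x, rfl⟩
      induction x using Multiplicative.rec with | _ x
      obtain ⟨k, rfl⟩ := ZMod.intCast_surjective x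
      exact ⟨k, (hf k).symm⟩
    · rintro ⟨k, rfl⟩
      exact ⟨_, hf k⟩

theorem zhom_conj {n : ℕ} (f : Multiplicative (ZMod n) →* G) (x : G)
    (h : x * f (Multiplicative.ofAdd 1) = (f (Multiplicative.ofAdd 1))⁻¹ * x)
    (i : ZMod n) : f (Multiplicative.ofAdd i) * x = x * f (Multiplicative.ofAdd (-i)) := by
  obtain ⟨k, rfl⟩ := ZMod.intCast_surjective i
  have h1 : (Multiplicative.ofAdd (k : ZMod n)) = (Multiplicative.ofAdd (1 : ZMod n)) ^ k := by
    rw [← ofAdd_zsmul]; simp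
  rw [ofAdd_neg, h1, map_inv, map_zpow]
  have : SemiconjBy x (f (Multiplicative.ofAdd 1)) (f (Multiplicative.ofAdd 1))⁻¹ := h
  have := (this.inv_right).zpow_right k
  simp only [inv_inv, inv_zpow] at this
  exact this.eq.symm

theorem dhom (q s : G) (hq : orderOf q = 3) (hs : orderOf s = 2) (h : s * q = q⁻¹ * s) :
    ∃ f : DihedralGroup 3 →* G, Function.Injective f ∧ q ∈ f.range ∧ s ∈ f.range ∧
      ∀ H : Subgroup G, q ∈ H → s ∈ H → f.range ≤ H := by
  obtain ⟨e, e1, e2, e3⟩ := zhom 3 q hq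
  have hc := zhom_conj e s (by rw [e1, h])
  have hss : s * s = 1 := by rw [← sq, ← hs, pow_orderOf_eq_one]
  have hq2 : q ≠ q⁻¹ := by
    intro h
    have : q ^ 2 = 1 := by rw [sq]; nth_rw 1 [h]; simp
    have := orderOf_dvd_of_pow_eq_one this
    rw [hq] at this; omega
  let f : DihedralGroup 3 →* G :=
    { toFun := fun x => match x with
        | .r i => e (Multiplicative.ofAdd i)
        | .sr i => s * e (Multiplicative.ofAdd i)
      map_one' := by
        show e (Multiplicative.ofAdd 0) = 1
        simp
      map_mul' := by
        rintro (i | i) (j | j)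
        · simp [ofAdd_add]
        · simp only [DihedralGroup.r_mul_sr]
          rw [← mul_assoc, hc, sub_eq_neg_add, ofAdd_add, map_mul, mul_assoc]
        · simp [ofAdd_add, mul_assoc]
        · simp only [DihedralGroup.sr_mul_sr]
          rw [mul_assoc, ← mul_assoc (e _), hc, sub_eq_neg_add, ofAdd_add, map_mul, ← mul_assoc,
            ← mul_assoc, hss, one_mul] }
  have he : ∀ i, e i ∈ Subgroup.zpowers q := fun i => e3 ▸ ⟨i, rfl⟩
  refine ⟨f, ?_, ⟨.r 1, e1⟩, ⟨.sr 0, ?_⟩, ?_⟩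
  · rw [injective_iff_map_eq_one]
    rintro (i | i) hi
    · have : Multiplicative.ofAdd i = 1 := e2 (by rw [map_one]; exact hi)
      have : i = 0 := this
      rw [this]; rfl
    · exfalso
      have hi : s * e (Multiplicative.ofAdd i) = 1 := hi
      have hse : s = e (Multiplicative.ofAdd (-i)) := by
        rw [ofAdd_neg, map_inv]; exact eq_inv_of_mul_eq_one_left hi
      have hcm : s * q = q * s := by
        rw [hse, ← e1, ← map_mul e, ← map_mul e, mul_comm]
      rw [h] at hcm
      exact hq2 (mul_right_cancel hcm).symm
  · show s * e (Multiplicative.ofAdd 0) = s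
    simp
  · rintro H h1 h2 _ ⟨i | i, rfl⟩
    · exact (Subgroup.zpowers_le.2 h1) (he _)
    · exact H.mul_mem h2 ((Subgroup.zpowers_le.2 h1) (he _))

theorem s3hom (q s : G) (hq : orderOf q = 3) (hs : orderOf s = 2) (h : s * q = q⁻¹ * s) :
    ∃ f : Equiv.Perm (Fin 3) →* G, Function.Injective f ∧ q ∈ f.range ∧ s ∈ f.range ∧
      ∀ H : Subgroup G, q ∈ H → s ∈ H → f.range ≤ H := by
  obtain ⟨f, hf, h1, h2, h3⟩ := dhom q s hq hs h
  obtain ⟨g, hg, -, -, -⟩ := dhom (finRotate 3) (Equiv.swap (0 : Fin 3) 1)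
    (orderOf_eq_prime (by decide) (by decide)) (orderOf_eq_prime (by decide) (by decide))
    (by decide)
  have hb : Function.Bijective g := by
    rw [Fintype.bijective_iff_injective_and_card]
    refine ⟨hg, by rw [DihedralGroup.card]; decide⟩
  let e := MulEquiv.ofBijective g hb
  refine ⟨f.comp e.symm.toMonoidHom, hf.comp e.symm.injective, ?_, ?_, ?_⟩
  · obtain ⟨x, rfl⟩ := h1; exact ⟨e x, by simp⟩
  · obtain ⟨x, rfl⟩ := h2; exact ⟨e x, by simp⟩
  · rintro H h1 h2 _ ⟨x, rfl⟩
    exact h3 H h1 h2 ⟨_, rfl⟩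

theorem qhom (a x : G) (ha : orderOf a = 6) (hx : x * x = a ^ 3) (h : x * a = a⁻¹ * x) :
    ∃ f : QuaternionGroup 3 →* G, Function.Injective f ∧ a ∈ f.range ∧ x ∈ f.range ∧
      ∀ y ∈ f.range, y ∈ Subgroup.zpowers a ∨ ∃ v ∈ Subgroup.zpowers a, y = x * v := by
  obtain ⟨e, e1, e2, e3⟩ := zhom 6 a ha
  have hc := zhom_conj e x (by rw [e1, h])
  have hx' : x * x = e (Multiplicative.ofAdd 3) := by
    rw [hx, ← e1, ← map_pow]; rfl
  have hq2 : a ≠ a⁻¹ := by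
    intro h
    have : a ^ 2 = 1 := by rw [sq]; nth_rw 1 [h]; simp
    have := orderOf_dvd_of_pow_eq_one this
    rw [ha] at this; omega
  let f : QuaternionGroup 3 →* G :=
    { toFun := fun x' => match x' with
        | .a i => e (Multiplicative.ofAdd i)
        | .xa i => x * e (Multiplicative.ofAdd i)
      map_one' := by
        show e (Multiplicative.ofAdd 0) = 1
        simp
      map_mul' := by
        rintro (i | i) (j | j)
        · simp only [QuaternionGroup.a_mul_a]
          exact e.map_mul (Multiplicative.ofAdd i) (Multiplicative.ofAdd j)
        · simp only [QuaternionGroup.a_mul_xa]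
          rw [← mul_assoc, hc, sub_eq_neg_add, mul_assoc, ← map_mul]; rfl
        · simp only [QuaternionGroup.xa_mul_a]
          rw [mul_assoc, ← map_mul]; rfl
        · simp only [QuaternionGroup.xa_mul_xa]
          rw [mul_assoc, ← mul_assoc (e _), hc, ← mul_assoc, ← mul_assoc, hx', ← map_mul,
            ← map_mul]
          congr 1
          show Multiplicative.ofAdd _ = Multiplicative.ofAdd (3 + (-i) + j)
          congr 1
          revert i j; decide }
  have he : ∀ i, e i ∈ Subgroup.zpowers a := fun i => e3 ▸ ⟨i, rfl⟩
  refine ⟨f, ?_, ⟨.a 1, e1⟩, ⟨.xa 0, ?_⟩, ?_⟩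
  · rw [injective_iff_map_eq_one]
    rintro (i | i) hi
    · have : Multiplicative.ofAdd i = (1 : Multiplicative (ZMod 6)) := e2 (by rw [map_one]; exact hi)
      have : i = 0 := this
      rw [this]; rfl
    · exfalso
      have hi : x * e (Multiplicative.ofAdd i) = 1 := hi
      have hse : x = (e (Multiplicative.ofAdd i))⁻¹ := eq_inv_of_mul_eq_one_left hi
      have hcm : x * a = a * x := by
        rw [hse, ← e1, ← map_inv, ← map_mul, ← map_mul, mul_comm]
      rw [h] at hcm
      exact hq2 (mul_right_cancel hcm).symm
  · show x * e (Multiplicative.ofAdd (0 : ZMod 6)) = x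
    simp
  · rintro _ ⟨i | i, rfl⟩
    · exact Or.inl (he _)
    · exact Or.inr ⟨_, he _, rfl⟩

theorem prodhom {A B : Type} [Group A] [Group B] (f : A →* G) (g : B →* G)
    (hf : Function.Injective f) (hg : Function.Injective g) (hc : ∀ a b, Commute (f a) (g b))
    (hd : ∀ y, y ∈ f.range → y ∈ g.range → y = 1) :
    ∃ F : A × B →* G, Function.Injective F ∧ f.range ≤ F.range ∧ g.range ≤ F.range ∧
      (∀ H : Subgroup G, f.range ≤ H → g.range ≤ H → F.range ≤ H) ∧ ∀ a b, F (a, b) = f a * g b := by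
  refine ⟨f.noncommCoprod g hc, ?_, ?_, ?_, ?_, fun a b => by simp⟩
  · rw [injective_iff_map_eq_one]
    rintro ⟨a, b⟩ h
    simp only [MonoidHom.noncommCoprod_apply] at h
    have h1 : f a = 1 := hd _ ⟨a, rfl⟩ ⟨b⁻¹, by rw [map_inv]; exact (eq_inv_of_mul_eq_one_left h).symm⟩
    rw [h1, one_mul] at h
    rw [hf (h1.trans f.map_one.symm), hg (h.trans g.map_one.symm)]; rfl
  · rintro _ ⟨a, rfl⟩
    exact ⟨(a, 1), by simp⟩
  · rintro _ ⟨a, rfl⟩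
    exact ⟨(1, a), by simp⟩
  · rintro H h1 h2 _ ⟨⟨a, b⟩, rfl⟩
    rw [MonoidHom.noncommCoprod_apply]
    exact H.mul_mem (h1 ⟨_, rfl⟩) (h2 ⟨_, rfl⟩)

theorem prodhom' {A B : Type} [CommGroup A] [Group B] (f : A →* G) (g : B →* G)
    (hf : Function.Injective f) (hg : Function.Injective g) (hc : ∀ a b, Commute (f a) (g b))
    (hd : ∀ b : B, (∀ b', b * b' = b' * b) → b = 1) :
    ∃ F : A × B →* G, Function.Injective F ∧ f.range ≤ F.range ∧ g.range ≤ F.range ∧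
      (∀ H : Subgroup G, f.range ≤ H → g.range ≤ H → F.range ≤ H) := by
  obtain ⟨F, h1, h2, h3, h4, -⟩ := prodhom f g hf hg hc (by
    rintro _ ⟨a, rfl⟩ ⟨b, hb⟩
    rw [← hb, hd b, map_one]
    intro b'
    apply hg
    rw [map_mul, map_mul, hb]
    exact hc a b')
  exact ⟨F, h1, h2, h3, h4⟩

theorem isoOf {T : Type} [Group T] (F : T →* G) (hF : Function.Injective F)
    (hs : ∀ g, g ∈ F.range) : Nonempty (G ≃* T) :=
  ⟨(MulEquiv.ofBijective F ⟨hF, fun g => hs g⟩).symm⟩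

theorem semiOf {T : Type} [Group T] (F : T →* G) (hF : Function.Injective F)
    (hN : F.range.Normal) (x : G) (hx : x ∉ F.range) (hx2 : orderOf x = 2)
    (hs : ∀ g, g ∈ F.range ∨ g * x ∈ F.range) :
    ∃ φ : Multiplicative (ZMod 2) →* MulAut T, Nonempty (G ≃* T ⋊[φ] Multiplicative (ZMod 2)) := by
  have hxx : x * x = 1 := by rw [← sq, ← hx2, pow_orderOf_eq_one]
  have hx3 : x ^ 2 = 1 := by rw [sq, hxx]
  have hc : F.range.IsComplement' (Subgroup.zpowers x) := by
    apply Subgroup.isComplement'_of_disjoint_and_mul_eq_univ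
    · rw [Subgroup.disjoint_def]
      rintro y hy ⟨k, rfl⟩
      rcases Int.even_or_odd' k with ⟨m, rfl | rfl⟩
      · simp [zpow_mul, hx3]
      · exfalso; apply hx; simpa [zpow_add, zpow_mul, hx3] using hy
    · rw [Set.eq_univ_iff_forall]
      intro g
      rcases hs g with h | h
      · exact ⟨g, h, 1, one_mem _, by simp⟩
      · exact ⟨g * x, h, x, Subgroup.mem_zpowers x, by simp [mul_assoc, hxx]⟩
  obtain ⟨e, e1, e2, e3⟩ := zhom 2 x hx2
  have e4 : Multiplicative (ZMod 2) ≃* Subgroup.zpowers x :=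
    (MonoidHom.ofInjective e2).trans (MulEquiv.subgroupCongr e3)
  exact ⟨_, ⟨(SemidirectProduct.mulEquivSubgroup hc).symm.trans
    (SemidirectProduct.congr' (MonoidHom.ofInjective hF).symm e4.symm)⟩⟩

theorem z2cases (a : Multiplicative (ZMod 2)) : a = 1 ∨ a = Multiplicative.ofAdd 1 := by
  revert a; decide

def alph : MulAut (Multiplicative (ZMod 2) × Multiplicative (ZMod 2)) where
  toFun x := (x.2, x.1 * x.2)
  invFun x := (x.2 * x.1, x.1)
  left_inv := by decide
  right_inv := by decide
  map_mul' := by decide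

theorem alph_ord : orderOf alph = 3 := by
  apply orderOf_eq_prime
  · apply MulEquiv.ext
    intro x
    show alph (alph (alph x)) = x
    revert x; decide
  · intro h
    have : alph (1, Multiplicative.ofAdd 1) = (1, Multiplicative.ofAdd 1) := by rw [h]; rfl
    revert this; decide

theorem vhom (s t : G) (hs : orderOf s = 2) (ht : orderOf t = 2)
    (hne : s ≠ t) (hst : s * t = t * s) :
    ∃ F : Multiplicative (ZMod 2) × Multiplicative (ZMod 2) →* G, Function.Injective F ∧
      F (Multiplicative.ofAdd 1, 1) = s ∧ F (1, Multiplicative.ofAdd 1) = t ∧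
      ∀ H : Subgroup G, s ∈ H → t ∈ H → F.range ≤ H := by
  obtain ⟨f, f1, f2, f3⟩ := zhom 2 s hs
  obtain ⟨g, g1, g2, g3⟩ := zhom 2 t ht
  obtain ⟨F, F1, -, -, F4, F3⟩ := prodhom f g f2 g2 (by
    intro a b
    rcases z2cases a with rfl | rfl <;> rcases z2cases b with rfl | rfl <;>
      simp [f1, g1]
    exact hst) (by
    rintro _ ⟨a, rfl⟩ ⟨b, hb⟩
    rcases z2cases a with rfl | rfl <;> rcases z2cases b with rfl | rfl <;>
      simp_all)
  exact ⟨F, F1, by simp [F3, f1], by simp [F3, g1], fun H h1 h2 => F4 H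
    (f3 ▸ Subgroup.zpowers_le.2 h1) (g3 ▸ Subgroup.zpowers_le.2 h2)⟩

theorem whom (q s t : G) (hq : orderOf q = 3) (hs : orderOf s = 2) (ht : orderOf t = 2)
    (hne : s ≠ t) (hst : s * t = t * s) (h1 : q * s = t * q) (h2 : q * t = s * t * q) :
    ∃ φ : Multiplicative (ZMod 3) →*
        MulAut (Multiplicative (ZMod 2) × Multiplicative (ZMod 2)),
    φ (Multiplicative.ofAdd 1) = alph ∧
    ∃ f : (Multiplicative (ZMod 2) × Multiplicative (ZMod 2)) ⋊[φ] Multiplicative (ZMod 3) →* G,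
      Function.Injective f ∧ q ∈ f.range ∧ s ∈ f.range ∧ t ∈ f.range ∧
      ∀ H : Subgroup G, q ∈ H → s ∈ H → t ∈ H → f.range ≤ H := by
  obtain ⟨F, F1, F2, F3, F5⟩ := vhom s t hs ht hne hst
  obtain ⟨φ, p1, p2, p3⟩ := zhom 3 alph alph_ord
  obtain ⟨e, e1, e2, e3⟩ := zhom 3 q hq
  have F4 : F (Multiplicative.ofAdd 1, Multiplicative.ofAdd 1) = s * t := by
    rw [← F2, ← F3, ← map_mul]; rfl
  have hss : s * s = 1 := by rw [← sq, ← hs, pow_orderOf_eq_one]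
  have htt : t * t = 1 := by rw [← sq, ← ht, pow_orderOf_eq_one]
  have base : ∀ n, F (alph n) = q * F n * q⁻¹ := by
    rintro ⟨a, b⟩
    rcases z2cases a with rfl | rfl <;> rcases z2cases b with rfl | rfl
    · show F 1 = q * F 1 * q⁻¹
      simp
    · show F (Multiplicative.ofAdd 1, Multiplicative.ofAdd 1) = _
      rw [F4, F3, h2]; group
    · show F (1, Multiplicative.ofAdd 1) = _
      rw [F3, F2, h1]; group
    · show F (Multiplicative.ofAdd 1, 1) = _
      rw [F2, F4, ← mul_assoc, h1, mul_assoc t, h2, ← mul_assoc t, ← mul_assoc t, hst.symm.trans rfl, mul_assoc s, htt]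
      group
  have compat : ∀ k : ℕ, ∀ n, F ((alph ^ k) n) = q ^ k * F n * (q ^ k)⁻¹ := by
    intro k
    induction k with
    | zero => intro n; simp
    | succ k ih =>
      intro n
      rw [pow_succ', pow_succ']
      show F (alph ((alph ^ k) n)) = _
      rw [base, ih]; group
  have hz : ∀ z : Multiplicative (ZMod 3), ∃ k : ℕ, z = Multiplicative.ofAdd 1 ^ k := by
    intro z
    revert z
    suffices h : ∀ z : Multiplicative (ZMod 3), ∃ k : Fin 3, z = Multiplicative.ofAdd 1 ^ (k : ℕ) by
      intro z; obtain ⟨k, hk⟩ := h z; exact ⟨k, hk⟩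
    decide
  refine ⟨φ, p1, SemidirectProduct.lift F e ?_, ?_, ?_, ?_, ?_, ?_⟩
  · intro g
    obtain ⟨k, rfl⟩ := hz g
    ext1 n
    show F ((φ (Multiplicative.ofAdd 1 ^ k)) n) = e (Multiplicative.ofAdd 1 ^ k) * F n * (e (Multiplicative.ofAdd 1 ^ k))⁻¹
    rw [map_pow, map_pow, p1, e1, compat]
  · rw [injective_iff_map_eq_one]
    rintro ⟨n, z⟩ h
    have h : F n * e z = 1 := h
    have hF : F n * F n = 1 := by
      rw [← map_mul]
      convert F.map_one
      clear * -; revert n; decide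
    have hE : e z * e z * e z = 1 := by
      rw [← map_mul, ← map_mul]
      convert e.map_one
      clear * -; revert z; decide
    have h3 : e z = F n := by
      have := eq_inv_of_mul_eq_one_right h
      rw [this]; exact (eq_inv_of_mul_eq_one_left hF).symm
    have h4 : e z = 1 := by rw [h3, hF, one_mul] at hE; rw [h3, hE]
    have h5 : F n = 1 := by rw [← h3, h4]
    rw [F1 (h5.trans F.map_one.symm), e2 (h4.trans e.map_one.symm)]; rfl
  · exact ⟨SemidirectProduct.inr (Multiplicative.ofAdd 1), by simp [e1]⟩
  · exact ⟨SemidirectProduct.inl (Multiplicative.ofAdd 1, 1), by simp [F2]⟩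
  · exact ⟨SemidirectProduct.inl (1, Multiplicative.ofAdd 1), by simp [F3]⟩
  · rintro H h1 h2 h3 _ ⟨⟨n, z⟩, rfl⟩
    show F n * e z ∈ H
    have he : e z ∈ Subgroup.zpowers q := e3 ▸ ⟨z, rfl⟩
    exact H.mul_mem (F5 H h2 h3 ⟨n, rfl⟩) (Subgroup.zpowers_le.2 h1 he)

theorem a4hom (q s t : G) (hq : orderOf q = 3) (hs : orderOf s = 2) (ht : orderOf t = 2)
    (hne : s ≠ t) (hst : s * t = t * s) (h1 : q * s = t * q) (h2 : q * t = s * t * q) :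
    ∃ f : alternatingGroup (Fin 4) →* G,
      Function.Injective f ∧ q ∈ f.range ∧ s ∈ f.range ∧ t ∈ f.range ∧
      ∀ H : Subgroup G, q ∈ H → s ∈ H → t ∈ H → f.range ≤ H := by
  obtain ⟨φ, p1, f, f1, f2, f3, f4, f5⟩ := whom q s t hq hs ht hne hst h1 h2
  have hext : ∀ φ' : Multiplicative (ZMod 3) →*
      MulAut (Multiplicative (ZMod 2) × Multiplicative (ZMod 2)),
      φ' (Multiplicative.ofAdd 1) = alph → φ' = φ := by
    intro φ' h
    apply MonoidHom.ext
    intro z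
    suffices h : ∀ z : Multiplicative (ZMod 3), ∃ k : Fin 3, z = Multiplicative.ofAdd 1 ^ (k : ℕ) by
      obtain ⟨k, rfl⟩ := h z
      rw [map_pow, map_pow, p1, ‹φ' _ = _›]
    decide
  obtain ⟨φ', p1', g, g1, -, -, -, -⟩ := whom (G := alternatingGroup (Fin 4))
    ⟨Equiv.swap 0 1 * Equiv.swap 1 2, Equiv.Perm.mem_alternatingGroup.2 (by decide)⟩
    ⟨Equiv.swap 0 1 * Equiv.swap 2 3, Equiv.Perm.mem_alternatingGroup.2 (by decide)⟩
    ⟨Equiv.swap 1 2 * Equiv.swap 0 3, Equiv.Perm.mem_alternatingGroup.2 (by decide)⟩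
    (orderOf_eq_prime (by decide) (by decide)) (orderOf_eq_prime (by decide) (by decide))
    (orderOf_eq_prime (by decide) (by decide)) (by decide) (by decide) (by decide) (by decide)
  obtain rfl := hext φ' p1'
  have hb : Function.Bijective g := by
    rw [Nat.bijective_iff_injective_and_card]
    refine ⟨g1, ?_⟩
    rw [SemidirectProduct.card, Nat.card_prod]
    have : Nat.card (alternatingGroup (Fin 4)) = 12 := by
      rw [nat_card_alternatingGroup]; simp; decide
    rw [this]; simp
  let e := MulEquiv.ofBijective g hb
  refine ⟨f.comp e.symm.toMonoidHom, f1.comp e.symm.injective, ?_, ?_, ?_, ?_⟩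
  · obtain ⟨x, rfl⟩ := f2; exact ⟨e x, by simp⟩
  · obtain ⟨x, rfl⟩ := f3; exact ⟨e x, by simp⟩
  · obtain ⟨x, rfl⟩ := f4; exact ⟨e x, by simp⟩
  · rintro H h1 h2 h3 _ ⟨x, rfl⟩
    exact f5 H h1 h2 h3 ⟨_, rfl⟩

theorem zp2 (s : G) (h : orderOf s = 2) (k : ℤ) : s ^ k = 1 ∨ s ^ k = s := by
  have hs : s ^ 2 = 1 := by rw [← h, pow_orderOf_eq_one]
  rcases Int.even_or_odd' k with ⟨m, rfl | rfl⟩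
  · left; simp [zpow_mul, hs]
  · right; simp [zpow_add, zpow_mul, hs]

theorem zp3 (c : G) (h : orderOf c = 3) (k : ℤ) : c ^ k = 1 ∨ c ^ k = c ∨ c ^ k = c⁻¹ := by
  have hs : c ^ 3 = 1 := by rw [← h, pow_orderOf_eq_one]
  obtain ⟨m, hm⟩ : ∃ m, k = 3 * m ∨ k = 3 * m + 1 ∨ k = 3 * m + -1 := ⟨(k + 1) / 3, by omega⟩
  rcases hm with rfl | rfl | rfl <;> simp [zpow_add, zpow_mul, hs]

theorem ord6 (c s : G) (hc : orderOf c = 3) (hs : orderOf s = 2) (h : Commute c s) :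
    orderOf (c * s) = 6 := by
  rw [h.orderOf_mul_eq_mul_orderOf_of_coprime (by rw [hc, hs]; decide), hc, hs]

theorem uniq6 (c s x i : G) (hc : orderOf c = 3) (hs : orderOf s = 2) (h : Commute c s)
    (hx : orderOf x = 3) (hi : orderOf i = 2) (hxi : Commute x i)
    (hz : Subgroup.zpowers (x * i) = Subgroup.zpowers (c * s)) : (x = c ∨ x = c⁻¹) ∧ i = s := by
  have hm : x * i ∈ Subgroup.zpowers (c * s) := hz ▸ Subgroup.mem_zpowers _
  obtain ⟨k, hk⟩ := Subgroup.mem_zpowers_iff.1 hm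
  rw [h.mul_zpow] at hk
  have hcs : Commute (c ^ k) (s ^ k) := (h.zpow_left k).zpow_right k
  have c3 : c ^ 3 = 1 := by rw [← hc, pow_orderOf_eq_one]
  have s2 : s ^ 2 = 1 := by rw [← hs, pow_orderOf_eq_one]
  have x3 : x ^ 3 = 1 := by rw [← hx, pow_orderOf_eq_one]
  have i2 : i ^ 2 = 1 := by rw [← hi, pow_orderOf_eq_one]
  have i1 : i ≠ 1 := by rintro rfl; simp at hi
  have x1 : x ≠ 1 := by rintro rfl; simp at hx
  have ck3 : (c ^ k) ^ 3 = 1 := by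
    rw [← zpow_natCast, ← zpow_mul, mul_comm, zpow_mul, zpow_natCast, c3, one_zpow]
  have sk2 : (s ^ k) ^ 2 = 1 := by
    rw [← zpow_natCast, ← zpow_mul, mul_comm, zpow_mul, zpow_natCast, s2, one_zpow]
  have e1 : i = s ^ k := by
    have := congrArg (· ^ 3) hk
    simp only [hcs.mul_pow, hxi.mul_pow, ck3, x3, one_mul] at this
    rw [pow_succ, sk2, pow_succ, i2] at this
    simpa using this.symm
  have e2 : x = c ^ k := by rw [e1] at hk; exact (mul_right_cancel hk).symm
  constructor
  · rcases zp3 c hc k with h | h | h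
    · exact absurd (e2.trans h) x1
    · left; rw [e2, h]
    · right; rw [e2, h]
  · rcases zp2 s hs k with h | h
    · exact absurd (e1.trans h) i1
    · rw [e1, h]

structure Dat (c s t u : G) : Prop where
  ord : ∀ g : G, orderOf g ∈ ({1, 2, 3, 4, 6} : Set ℕ)
  hc : orderOf c = 3
  hs : orderOf s = 2
  ht : orderOf t = 2
  hu : orderOf u = 2
  cs : Commute c s
  ct : Commute c t
  cu : Commute c u
  st : s ≠ t
  su : s ≠ u
  tu : t ≠ u
  key : ∀ x i : G, orderOf x = 3 → orderOf i = 2 → Commute x i →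
    (x = c ∨ x = c⁻¹) ∧ (i = s ∨ i = t ∨ i = u)

theorem getDat3 (horders : ∀ g : G, orderOf g ∈ ({1, 2, 3, 4, 6} : Set ℕ))
    (hthree : {H : Subgroup G | IsCyclic H ∧ Nat.card H = 6}.ncard = 3)
    (c s t u : G) (hc : orderOf c = 3) (hs : orderOf s = 2) (ht : orderOf t = 2)
    (hu : orderOf u = 2) (cs : Commute c s) (ct : Commute c t) (cu : Commute c u)
    (st : s ≠ t) (su : s ≠ u) (tu : t ≠ u) : Dat c s t u := by
  refine ⟨horders, hc, hs, ht, hu, cs, ct, cu, st, su, tu, ?_⟩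
  have mem : ∀ x i : G, orderOf x = 3 → orderOf i = 2 → Commute x i →
      Subgroup.zpowers (x * i) ∈ {H : Subgroup G | IsCyclic H ∧ Nat.card H = 6} := by
    intro x i hx hi h
    exact ⟨inferInstance, by rw [Nat.card_zpowers, ord6 x i hx hi h]⟩
  have ne : ∀ i j, orderOf i = 2 → orderOf j = 2 → Commute c i → Commute c j → i ≠ j →
      Subgroup.zpowers (c * i) ≠ Subgroup.zpowers (c * j) := by
    intro i j hi hj hci hcj hij h
    exact hij (uniq6 c j c i hc hj hcj hc hi hci h).2
  have fin : {H : Subgroup G | IsCyclic H ∧ Nat.card H = 6}.Finite :=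
    Set.finite_of_ncard_ne_zero (by rw [hthree]; decide)
  have heq := Set.eq_of_subset_of_ncard_le
    (s := {Subgroup.zpowers (c * s), Subgroup.zpowers (c * t), Subgroup.zpowers (c * u)})
    (t := {H : Subgroup G | IsCyclic H ∧ Nat.card H = 6}) (by
      rintro H (rfl | rfl | rfl)
      · exact mem _ _ hc hs cs
      · exact mem _ _ hc ht ct
      · exact mem _ _ hc hu cu) (by
      rw [hthree, Set.ncard_eq_three.2 ⟨_, _, _, ne _ _ hs ht cs ct st, ne _ _ hs hu cs cu su,
        ne _ _ ht hu ct cu tu, rfl⟩]) fin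
  intro x i hx hi hxi
  have := mem x i hx hi hxi
  rw [← heq] at this
  rcases this with h | h | h
  · obtain ⟨h1, h2⟩ := uniq6 c s x i hc hs cs hx hi hxi h
    exact ⟨h1, Or.inl h2⟩
  · obtain ⟨h1, h2⟩ := uniq6 c t x i hc ht ct hx hi hxi h
    exact ⟨h1, Or.inr (Or.inl h2)⟩
  · obtain ⟨h1, h2⟩ := uniq6 c u x i hc hu cu hx hi hxi h
    exact ⟨h1, Or.inr (Or.inr h2)⟩

theorem getDat [Finite G] (horders : ∀ g : G, orderOf g ∈ ({1, 2, 3, 4, 6} : Set ℕ))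
    (hthree : {H : Subgroup G | IsCyclic H ∧ Nat.card H = 6}.ncard = 3)
    (hexists : ∃ H K : Subgroup G, IsCyclic H ∧ Nat.card H = 6 ∧ IsCyclic K ∧
      Nat.card K = 6 ∧ H ≠ K ∧ Nat.card (H ⊓ K : Subgroup G) = 3) :
    ∃ c s t u : G, Dat c s t u ∧ ((s * t = t * s ∧ u = s * t) ∨ (s * t ≠ t * s ∧ u = s * t * s)) := by
  obtain ⟨H, K, hH, hH6, hK, hK6, hne, h3⟩ := hexists
  obtain ⟨⟨c, hcm⟩, hc⟩ := exists_prime_orderOf_dvd_card' (G := (H ⊓ K : Subgroup G)) 3 (by rw [h3])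
  rw [Subgroup.orderOf_mk] at hc
  have inv : ∀ L : Subgroup G, IsCyclic L → Nat.card L = 6 → c ∈ L →
      ∃ s, orderOf s = 2 ∧ Commute c s ∧ Subgroup.zpowers (c * s) = L := by
    intro L hL hL6 hcL
    obtain ⟨⟨s, hsL⟩, hs⟩ := exists_prime_orderOf_dvd_card' (G := L) 2 (by rw [hL6]; decide)
    rw [Subgroup.orderOf_mk] at hs
    have hcs : Commute c s := by
      have := (IsCyclic.isMulCommutative (α := L)).is_comm.comm (⟨c, hcL⟩ : L) ⟨s, hsL⟩
      exact congrArg Subtype.val this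
    refine ⟨s, hs, hcs, ?_⟩
    apply Subgroup.eq_of_le_of_card_ge
    · exact Subgroup.zpowers_le.2 (L.mul_mem hcL hsL)
    · rw [Nat.card_zpowers, ord6 c s hc hs hcs, hL6]
  obtain ⟨s, hs, cs, rfl⟩ := inv H hH hH6 hcm.1
  obtain ⟨t, ht, ct, rfl⟩ := inv K hK hK6 hcm.2
  have st : s ≠ t := by rintro rfl; exact hne rfl
  have ss : s * s = 1 := by rw [← sq, ← hs, pow_orderOf_eq_one]
  have tt : t * t = 1 := by rw [← sq, ← ht, pow_orderOf_eq_one]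
  have s1 : s ≠ 1 := by rintro rfl; simp at hs
  have t1 : t ≠ 1 := by rintro rfl; simp at ht
  by_cases hcomm : s * t = t * s
  · refine ⟨c, s, t, s * t, getDat3 horders hthree c s t (s * t) hc hs ht ?_ cs ct
      (cs.mul_right ct) st ?_ ?_, Or.inl ⟨hcomm, rfl⟩⟩
    · apply orderOf_eq_prime
      · rw [(show Commute s t from hcomm).mul_pow, sq, sq, ss, tt, one_mul]
      · intro h
        apply st
        rw [eq_inv_of_mul_eq_one_left h]; exact (eq_inv_of_mul_eq_one_left tt).symm
    · intro h; exact t1 (by simpa using h)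
    · intro h; exact s1 (by simpa using h)
  · refine ⟨c, s, t, s * t * s, getDat3 horders hthree c s t _ hc hs ht ?_ cs ct
      ((cs.mul_right ct).mul_right cs) st ?_ ?_, Or.inr ⟨hcomm, rfl⟩⟩
    · apply orderOf_eq_prime
      · rw [sq, mul_assoc, ← mul_assoc s (s * t), ← mul_assoc s s, ss, one_mul, ← mul_assoc,
          mul_assoc s, tt, mul_one, ss]
      · intro h
        apply t1
        have : s * (s * t * s) * s = s * 1 * s := by rw [h]
        simpa [mul_assoc, ss, ← mul_assoc s s] using this
    · intro h
      apply hcomm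
      have : s * s = s * (s * t * s) := by rw [← h]
      rw [mul_assoc s t s, ← mul_assoc s s, ss, one_mul] at this
      have h2 : s = t := by
        rw [eq_inv_of_mul_eq_one_left this.symm]; exact eq_inv_of_mul_eq_one_left ss
      rw [h2]
    · intro h
      apply hcomm
      have : t * s = s * t * s * s := by rw [← h]
      rw [mul_assoc, ss, mul_one] at this
      exact this.symm

theorem commute_iff_conj (g x : G) : Commute g x ↔ g * x * g⁻¹ = x := by
  rw [mul_inv_eq_iff_eq_mul]; rfl

def MM (c s t u g : G) : Prop :=
  ∃ p v, (p = 1 ∨ p = c ∨ p = c⁻¹) ∧ (v = 1 ∨ v = s ∨ v = t ∨ v = u) ∧ g = p * v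

namespace Dat
variable {c s t u : G} (d : Dat c s t u)
include d

theorem ss : s * s = 1 := by rw [← sq, ← d.hs, pow_orderOf_eq_one]
theorem tt : t * t = 1 := by rw [← sq, ← d.ht, pow_orderOf_eq_one]
theorem uu : u * u = 1 := by rw [← sq, ← d.hu, pow_orderOf_eq_one]
theorem s1 : s ≠ 1 := by intro h; have := d.hs; simp [h] at this
theorem t1 : t ≠ 1 := by intro h; have := d.ht; simp [h] at this
theorem u1 : u ≠ 1 := by intro h; have := d.hu; simp [h] at this

theorem conjC (g : G) : g * c * g⁻¹ = c ∨ g * c * g⁻¹ = c⁻¹ := by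
  apply (d.key (g * c * g⁻¹) (g * s * g⁻¹) _ _ _).1
  · rw [← MulAut.conj_apply, MulEquiv.orderOf_eq, d.hc]
  · rw [← MulAut.conj_apply, MulEquiv.orderOf_eq, d.hs]
  · exact d.cs.map (MulAut.conj g)

theorem invC (i : G) (hi : orderOf i = 2) (h : Commute c i) : i = s ∨ i = t ∨ i = u :=
  (d.key c i d.hc hi h).2

theorem conjComm (g i : G) (h : Commute c i) : Commute c (g * i * g⁻¹) := by
  have h1 : Commute (g * c * g⁻¹) (g * i * g⁻¹) := h.map (MulAut.conj g)
  rcases d.conjC g with h2 | h2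
  · rwa [h2] at h1
  · rw [h2] at h1; simpa using h1

theorem conjI (g i : G) (hi : orderOf i = 2) (h : Commute c i) :
    g * i * g⁻¹ = s ∨ g * i * g⁻¹ = t ∨ g * i * g⁻¹ = u := by
  apply d.invC _ _ (d.conjComm g i h)
  rw [← MulAut.conj_apply, MulEquiv.orderOf_eq, hi]

theorem notComm {g : G} (h : ¬ Commute c g) : g * c * g⁻¹ = c⁻¹ := by
  rcases d.conjC g with h2 | h2
  · exact absurd ((commute_iff_conj g c).2 h2).symm h
  · exact h2

theorem idx2 {g x : G} (h : ¬ Commute c g) (h' : ¬ Commute c x) : Commute c (g * x) := by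
  apply Commute.symm
  rw [commute_iff_conj]
  have h1 := d.notComm h
  have h2 := d.notComm h'
  calc g * x * c * (g * x)⁻¹ = g * (x * c * x⁻¹) * g⁻¹ := by group
    _ = (g * c * g⁻¹)⁻¹ := by rw [h2]; group
    _ = c := by rw [h1, inv_inv]

theorem MM_of (g : G) (h : Commute c g) : MM c s t u g ∨
    (orderOf g = 3 ∧ ∀ i, orderOf i = 2 → ¬ Commute g i) := by
  have ho := d.ord g
  simp only [Set.mem_insert_iff, Set.mem_singleton_iff] at ho
  rcases ho with ho | ho | ho | ho | ho
  · left
    rw [orderOf_eq_one_iff] at ho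
    exact ⟨1, 1, Or.inl rfl, Or.inl rfl, by simp [ho]⟩
  · left
    exact ⟨1, g, Or.inl rfl, Or.inr (d.invC g ho h), by simp⟩
  · by_cases hi : ∃ i, orderOf i = 2 ∧ Commute g i
    · obtain ⟨i, hi, hgi⟩ := hi
      left
      exact ⟨g, 1, Or.inr (d.key g i ho hi hgi).1, Or.inl rfl, by simp⟩
    · right
      push Not at hi
      exact ⟨ho, hi⟩
  · exfalso
    have h12 : orderOf (c * g) = 12 := by
      rw [h.orderOf_mul_eq_mul_orderOf_of_coprime (by rw [d.hc, ho]; decide), d.hc, ho]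
    have := d.ord (c * g)
    rw [h12] at this
    simp at this
  · left
    have h3 : orderOf (g ^ 3) = 2 := by rw [orderOf_pow' g (by decide), ho]; decide
    have h2 : orderOf (g ^ 4) = 3 := by rw [orderOf_pow' g (by decide), ho]; decide
    have hk := d.key (g ^ 4) (g ^ 3) h2 h3 (Commute.pow_pow_self g 4 3)
    refine ⟨g ^ 4, g ^ 3, Or.inr hk.1, Or.inr hk.2, ?_⟩
    rw [← pow_add, show 4 + 3 = 6 + 1 from rfl, pow_succ, ← ho, pow_orderOf_eq_one, one_mul]

theorem MM_of' (g i : G) (h : Commute c g) (hi : orderOf i = 2) (hgi : Commute g i) :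
    MM c s t u g := by
  rcases d.MM_of g h with h | h
  · exact h
  · exact absurd hgi (h.2 i hi)

theorem MM_mem (H : Subgroup G) (h1 : c ∈ H) (h2 : s ∈ H) (h3 : t ∈ H) (h4 : u ∈ H) {g : G}
    (h : MM c s t u g) : g ∈ H := by
  obtain ⟨p, v, hp, hv, rfl⟩ := h
  apply H.mul_mem
  · rcases hp with rfl | rfl | rfl
    exacts [H.one_mem, h1, H.inv_mem h1]
  · rcases hv with rfl | rfl | rfl | rfl
    exacts [H.one_mem, h2, h3, h4]

theorem caseA (hne : s * t ≠ t * s) (hu : u = s * t * s) :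
    Nonempty (G ≃* Multiplicative (ZMod 3) × Equiv.Perm (Fin 3)) := by
  have ss := d.ss
  have tt := d.tt
  have si : s⁻¹ = s := (eq_inv_of_mul_eq_one_left ss).symm
  have ti : t⁻¹ = t := (eq_inv_of_mul_eq_one_left tt).symm
  have ss' : ∀ x, s * (s * x) = x := fun x => by rw [← mul_assoc, ss, one_mul]
  have tt' : ∀ x, t * (t * x) = x := fun x => by rw [← mul_assoc, tt, one_mul]
  have br : t * (s * t) = s * (t * s) := by
    have := d.conjI t s d.hs d.cs
    rw [ti, hu, mul_assoc, mul_assoc] at this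
    rcases this with h | h | h
    · exfalso; apply hne
      have : t * (t * (s * t)) = t * s := by rw [h]
      rwa [tt'] at this
    · exfalso
      apply d.st
      have : t * (t * (s * t)) * t = t * t * t := by rw [h]
      simpa [mul_assoc, tt', tt] using this
    · exact h
  have br' : ∀ x, t * (s * (t * x)) = s * (t * (s * x)) := fun x => by
    have := congrArg (· * x) br
    simpa [mul_assoc] using this
  have hq : orderOf (s * t) = 3 := by
    have : Fact (Nat.Prime 3) := ⟨by decide⟩
    apply orderOf_eq_prime
    · rw [pow_succ, sq]
      simp only [mul_assoc]
      rw [br, ss', tt', ss]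
    · intro h
      apply d.st
      rw [eq_inv_of_mul_eq_one_left h, ti]
  have fix : ∀ g, ∃ j ∈ Subgroup.zpowers (s * t), Commute (j * g) s := by
    intro g
    have hq := Subgroup.mem_zpowers (s * t)
    rcases d.conjI g s d.hs d.cs with h | h | h
    · exact ⟨1, one_mem _, by rw [one_mul, commute_iff_conj, h]⟩
    · refine ⟨(s * t)⁻¹, inv_mem hq, ?_⟩
      rw [commute_iff_conj]
      calc (s * t)⁻¹ * g * s * ((s * t)⁻¹ * g)⁻¹ = (s * t)⁻¹ * (g * s * g⁻¹) * (s * t) := by group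
        _ = s := by
          rw [h, mul_inv_rev, si, ti]; simp only [mul_assoc]
          rw [br, ss', tt']
    · refine ⟨(s * t), hq, ?_⟩
      rw [commute_iff_conj]
      calc (s * t) * g * s * ((s * t) * g)⁻¹ = (s * t) * (g * s * g⁻¹) * (s * t)⁻¹ := by group
        _ = s := by
          rw [h, hu, mul_inv_rev, si, ti]; simp only [mul_assoc]
          rw [br', ss', ss', tt']
  have cq : Commute c (s * t) := d.cs.mul_right d.ct
  have fixC : ∀ g, Commute c g → Commute g s → ∃ p ∈ Subgroup.zpowers c, g = p ∨ g = p * s := by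
    intro g h1 h2
    have hcm := Subgroup.mem_zpowers c
    obtain ⟨p, v, hp, hv, rfl⟩ := d.MM_of' g s h1 d.hs h2
    have hpc : p ∈ Subgroup.zpowers c := by
      rcases hp with rfl | rfl | rfl
      exacts [one_mem _, hcm, inv_mem hcm]
    have hps : Commute p s := by
      rcases hp with rfl | rfl | rfl
      exacts [Commute.one_left _, d.cs, d.cs.inv_left]
    have hvs : Commute v s := by
      have := hps.inv_left.mul_left h2
      simpa using this
    refine ⟨p, hpc, ?_⟩
    rcases hv with rfl | rfl | rfl | rfl
    · left; simp
    · right; rfl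
    · exact absurd hvs.symm.eq hne
    · exfalso
      apply hne
      have := hvs.eq
      rw [hu] at this
      simp only [mul_assoc, ss', ss, mul_one] at this
      rw [this]
  have all : ∀ g, Commute c g := by
    by_contra hcon
    push Not at hcon
    obtain ⟨g, hg⟩ := hcon
    obtain ⟨j, hj, hjs⟩ := fix g
    have cj : Commute c j := by
      obtain ⟨k, rfl⟩ := Subgroup.mem_zpowers_iff.1 hj
      exact cq.zpow_right k
    have hg1 : ¬ Commute c (j * g) := by
      intro h
      apply hg
      have := cj.inv_right.mul_right h
      simpa using this
    generalize j * g = g1 at hjs hg1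
    have hg2 : ∃ g2, ¬ Commute c g2 ∧ Commute g2 s ∧ Commute g2 t := by
      rcases d.conjI g1 t d.ht d.ct with h | h | h
      · exfalso
        apply d.st
        have h2 := (commute_iff_conj _ _).1 hjs
        have h3 := h2.trans h.symm
        simpa using h3
      · exact ⟨g1, hg1, hjs, (commute_iff_conj _ _).2 h⟩
      · refine ⟨s * g1, ?_, (Commute.refl s).mul_left hjs, ?_⟩
        · intro h
          apply hg1
          have := d.cs.inv_right.mul_right h
          simpa using this
        · rw [commute_iff_conj]
          calc s * g1 * t * (s * g1)⁻¹ = s * (g1 * t * g1⁻¹) * s⁻¹ := by group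
            _ = t := by rw [h, hu, si]; simp only [mul_assoc, ss', ss, mul_one]
    obtain ⟨g2, hn, h2s, h2t⟩ := hg2
    obtain ⟨p, hp, h⟩ := fixC (g2 * g2) (d.idx2 hn hn) (h2s.mul_left h2s)
    have hpt : ∀ y, Commute c y → Commute p y := by
      intro y hy
      obtain ⟨k, rfl⟩ := Subgroup.mem_zpowers_iff.1 hp
      exact hy.zpow_left k
    have h22 : g2 * g2 = p := by
      rcases h with h | h
      · exact h
      · exfalso
        have h1 : Commute (p * s) t := h ▸ h2t.mul_left h2t
        have := (hpt t d.ct).inv_left.mul_left h1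
        rw [inv_mul_cancel_left] at this
        exact hne this.eq
    have hp1 : p = 1 := by
      have hcp : Commute g2 p := by rw [← h22]; exact (Commute.refl g2).mul_right (Commute.refl g2)
      obtain ⟨k, rfl⟩ := Subgroup.mem_zpowers_iff.1 hp
      rcases zp3 c d.hc k with h | h | h
      · exact h
      · rw [h] at hcp; exact absurd hcp.symm hn
      · rw [h] at hcp; exact absurd (by simpa using hcp.symm) hn
    have ho2 : orderOf g2 = 2 := by
      apply orderOf_eq_prime
      · rw [sq, h22, hp1]
      · rintro rfl; exact hn (Commute.one_right c)
    have hk := (d.key (s * t) g2 hq ho2 (h2s.mul_right h2t).symm).1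
    have hqs : Commute (s * t) s := by
      rcases hk with h | h
      · rw [h]; exact d.cs
      · rw [h]; exact d.cs.inv_left
    apply hne
    have := hqs.eq
    simp only [mul_assoc, ss'] at this
    have h3 : s * (s * (t * s)) = s * t := by rw [this]
    rw [ss'] at h3
    exact h3.symm
  obtain ⟨e, e1, e2, e3⟩ := zhom 3 c d.hc
  obtain ⟨f, f1, f2, f3, f4⟩ := s3hom (s * t) s hq d.hs (by
    rw [mul_inv_rev, si, ti, ss', mul_assoc, ss, mul_one])
  obtain ⟨F, F1, F2, F3, F4⟩ := prodhom' e f e2 f1 (by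
    intro a b
    have : e a ∈ Subgroup.zpowers c := e3 ▸ ⟨a, rfl⟩
    obtain ⟨k, hk⟩ := Subgroup.mem_zpowers_iff.1 this
    rw [← hk]
    exact (all _).zpow_left k) (by decide)
  apply isoOf F F1
  intro g
  obtain ⟨j, hj, hjs⟩ := fix g
  obtain ⟨p, hp, h⟩ := fixC (j * g) (all _) hjs
  have hjF : j ∈ F.range := F3 (Subgroup.zpowers_le.2 f2 hj)
  have hpF : p ∈ F.range := F2 (e3 ▸ hp)
  have hsF : s ∈ F.range := F3 f3
  have : j * g ∈ F.range := by
    rcases h with h | h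
    · rwa [h]
    · rw [h]; exact F.range.mul_mem hpF hsF
  exact (F.range.mul_mem_cancel_left hjF).1 this

theorem swap (h : s * t = t * s) (hu : u = s * t) :
    Dat c s u t ∧ s * u = u * s ∧ t = s * u := by
  have ss := d.ss
  refine ⟨⟨d.ord, d.hc, d.hs, d.hu, d.ht, d.cs, d.cu, d.ct, d.su, d.st, d.tu.symm, ?_⟩, ?_, ?_⟩
  · intro x i hx hi hxi
    have := d.key x i hx hi hxi
    tauto
  · subst hu; rw [← mul_assoc, ss, mul_assoc, ← h, ← mul_assoc, ss]
  · subst hu; rw [← mul_assoc, ss, one_mul]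

theorem noInv (hst : s * t = t * s) (hu : u = s * t) (hno : ∀ x, orderOf x = 2 → Commute c x)
    (g : G) (hg : ¬ Commute c g) :
    (g * g = s ∨ g * g = t ∨ g * g = u) ∧ ∀ v, (v = s ∨ v = t ∨ v = u) → Commute g v := by
  have h2 : Commute c (g * g) := d.idx2 hg hg
  have hz : orderOf (g * g) = 2 := by
    have ho := d.ord g
    simp only [Set.mem_insert_iff, Set.mem_singleton_iff] at ho
    rcases ho with ho | ho | ho | ho | ho
    · rw [orderOf_eq_one_iff] at ho
      exact absurd (ho ▸ Commute.one_right c) hg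
    · exact absurd (hno g ho) hg
    · exfalso; apply hg
      have h3 : g ^ 3 = 1 := by rw [← ho, pow_orderOf_eq_one]
      have : g = (g * g) * (g * g) := by
        rw [show g * g * (g * g) = g ^ 3 * g by simp only [pow_succ, pow_zero, one_mul, mul_assoc], h3, one_mul]
      rw [this]; exact h2.mul_right h2
    · rw [← sq, orderOf_pow' g (by decide), ho]; decide
    · exfalso; apply hg
      have h3 : orderOf (g ^ 3) = 2 := by rw [orderOf_pow' g (by decide), ho]; decide
      have h2 : orderOf (g ^ 2) = 3 := by rw [orderOf_pow' g (by decide), ho]; decide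
      have hk := d.key (g ^ 2) (g ^ 3) h2 h3 (Commute.pow_pow_self g 2 3)
      have hgg : Commute (g ^ 2) g := Commute.pow_self g 2
      rcases hk.1 with h | h
      · rwa [h] at hgg
      · rw [h] at hgg; simpa using hgg
  have hzV := d.invC _ hz h2
  refine ⟨hzV, ?_⟩
  intro v hv
  have hvo : orderOf v = 2 := by rcases hv with rfl | rfl | rfl; exacts [d.hs, d.ht, d.hu]
  have hvc : Commute c v := by rcases hv with rfl | rfl | rfl; exacts [d.cs, d.ct, d.cu]
  have hw := d.conjI g v hvo hvc
  by_contra hne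
  rw [commute_iff_conj] at hne
  have hzw : g * g ≠ g * v * g⁻¹ := by
    intro h
    have : g = v * g⁻¹ := mul_left_cancel (h.trans (mul_assoc _ _ _))
    have h5 : v = g * g := by nth_rw 1 [this]; simp
    apply hne
    rw [← h, h5]
  have hzv : g * g ≠ v := by
    intro h
    apply hne; rw [← h]; group
  have h4 : (g * v) * (g * v) = (g * v * g⁻¹) * (g * g) * v := by group
  have h5 : (g * v * g⁻¹) * (g * g) * v = 1 := by
    generalize g * v * g⁻¹ = w at *
    generalize g * g = z at *
    have ss := d.ss
    have tt := d.tt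
    have uu := d.uu
    have hsu : s * u = t := by rw [hu, ← mul_assoc, ss, one_mul]
    have hus : u * s = t := by rw [hu, hst, mul_assoc, ss, mul_one]
    have htu : t * u = s := by rw [hu, hst, ← mul_assoc, tt, one_mul]
    have hut : u * t = s := by rw [hu, mul_assoc, tt, mul_one]
    rcases hv with rfl | rfl | rfl <;> rcases hw with rfl | rfl | rfl <;>
      rcases hzV with rfl | rfl | rfl <;> first | (exact absurd rfl hne) | (exact absurd rfl hzw) | (exact absurd rfl hzv) | simp only [← hu, ← hst, hsu, hus, htu, hut, ss, tt, uu]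
  have hgv : ¬ Commute c (g * v) := by
    intro h
    apply hg
    have := h.mul_right hvc.inv_right
    simpa using this
  apply hgv
  apply hno
  apply orderOf_eq_prime
  · rw [sq, h4, h5]
  · intro h; exact hgv (h ▸ Commute.one_right c)

theorem vmem (hst : s * t = t * s) (hu : u = s * t) (z w : G) (hz : z = s ∨ z = t ∨ z = u)
    (hw : w = s ∨ w = t ∨ w = u) (hzw : z ≠ w) (H : Subgroup G) (h1 : z ∈ H) (h2 : w ∈ H) :
    s ∈ H ∧ t ∈ H ∧ u ∈ H := by
  have ss := d.ss
  have tt := d.tt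
  have hsu : s * u = t := by rw [hu, ← mul_assoc, ss, one_mul]
  have hut : u * t = s := by rw [hu, mul_assoc, tt, mul_one]
  have a1 : s ∈ H → t ∈ H → u ∈ H := fun a b => hu ▸ H.mul_mem a b
  have a2 : s ∈ H → u ∈ H → t ∈ H := fun a b => hsu ▸ H.mul_mem a b
  have a3 : u ∈ H → t ∈ H → s ∈ H := fun a b => hut ▸ H.mul_mem a b
  rcases hz with rfl | rfl | rfl <;> rcases hw with rfl | rfl | rfl <;> tauto

theorem caseB1 (hst : s * t = t * s) (hu : u = s * t) (hM : ∀ g, Commute c g → MM c s t u g) :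
    Nonempty (G ≃* Multiplicative (ZMod 2) × Multiplicative (ZMod 6)) ∨
    Nonempty (G ≃* Multiplicative (ZMod 2) × QuaternionGroup 3) ∨
    (∃ φ : Multiplicative (ZMod 2) →*
        MulAut (Multiplicative (ZMod 6) × Multiplicative (ZMod 2)),
      Nonempty (G ≃* (Multiplicative (ZMod 6) × Multiplicative (ZMod 2)) ⋊[φ]
        Multiplicative (ZMod 2))) := by
  have h6 : ∀ z, orderOf z = 2 → Commute c z → (∀ w, orderOf w = 2 → w ∈ Subgroup.zpowers (c * z) → w = z) ∧
      c ∈ Subgroup.zpowers (c * z) ∧ z ∈ Subgroup.zpowers (c * z) := by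
    intro z hz hcz
    have c3 : c ^ 3 = 1 := by rw [← d.hc, pow_orderOf_eq_one]
    have z2 : z ^ 2 = 1 := by rw [← hz, pow_orderOf_eq_one]
    refine ⟨?_, ?_, ?_⟩
    · intro w hw hwz
      obtain ⟨k, hk⟩ := Subgroup.mem_zpowers_iff.1 hwz
      have w2 : w ^ 2 = 1 := by rw [← hw, pow_orderOf_eq_one]
      have hw3 : w = w ^ 3 := by rw [pow_succ, w2, one_mul]
      have : w = z ^ k := by
        rw [hw3, ← hk, ← zpow_natCast, ← zpow_mul, mul_comm, zpow_mul, zpow_natCast, hcz.mul_pow,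
          c3, one_mul, pow_succ, z2, one_mul]
      rcases zp2 z hz k with h | h
      · rw [h] at this; rw [this] at hw; simp at hw
      · rw [this, h]
    · have : (c * z) ^ 4 = c := by
        rw [hcz.mul_pow, show 4 = 3 + 1 from rfl, pow_succ, c3, show 3 + 1 = 2 * 2 from rfl, pow_mul, z2]
        simp
      have hp := Subgroup.pow_mem _ (Subgroup.mem_zpowers (c * z)) 4
      rwa [this] at hp
    · have : (c * z) ^ 3 = z := by
        rw [hcz.mul_pow, c3, pow_succ, z2]; simp
      have hp := Subgroup.pow_mem _ (Subgroup.mem_zpowers (c * z)) 3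
      rwa [this] at hp
  obtain ⟨e, e1, e2, e3⟩ := zhom 6 (c * s) (ord6 c s d.hc d.hs d.cs)
  obtain ⟨f, f1, f2, f3⟩ := zhom 2 t d.ht
  have hcst : Commute (c * s) t := d.ct.mul_left hst
  obtain ⟨F, F1, F2, F3, F4, -⟩ := prodhom e f e2 f2 (by
    intro a b
    have ha : e a ∈ Subgroup.zpowers (c * s) := e3 ▸ ⟨a, rfl⟩
    have hb : f b ∈ Subgroup.zpowers t := f3 ▸ ⟨b, rfl⟩
    obtain ⟨k, hk⟩ := Subgroup.mem_zpowers_iff.1 ha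
    obtain ⟨l, hl⟩ := Subgroup.mem_zpowers_iff.1 hb
    rw [← hk, ← hl]
    exact (hcst.zpow_left k).zpow_right l) (by
    intro y h1 h2
    rw [e3] at h1
    rw [f3] at h2
    obtain ⟨l, rfl⟩ := Subgroup.mem_zpowers_iff.1 h2
    rcases zp2 t d.ht l with h | h
    · exact h
    · rw [h] at h1
      exact absurd ((h6 s d.hs d.cs).1 t d.ht h1).symm d.st)
  have hcF : c ∈ F.range := F2 (e3 ▸ (h6 s d.hs d.cs).2.1)
  have hsF : s ∈ F.range := F2 (e3 ▸ (h6 s d.hs d.cs).2.2)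
  have htF : t ∈ F.range := F3 (f3 ▸ Subgroup.mem_zpowers t)
  have huF : u ∈ F.range := hu ▸ F.range.mul_mem hsF htF
  have hle : F.range ≤ Subgroup.centralizer {c} := by
    apply F4
    · rw [e3, Subgroup.zpowers_le, Subgroup.mem_centralizer_singleton_iff]
      exact ((Commute.refl c).mul_right d.cs).symm
    · rw [f3, Subgroup.zpowers_le, Subgroup.mem_centralizer_singleton_iff]
      exact d.ct.symm
  have hR : ∀ g, g ∈ F.range ↔ Commute c g := by
    intro g
    constructor
    · intro h
      exact ((Subgroup.mem_centralizer_singleton_iff).1 (hle h)).symm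
    · intro h
      exact d.MM_mem _ hcF hsF htF huF (hM g h)
  by_cases all : ∀ g, Commute c g
  · left
    obtain ⟨e⟩ := isoOf F F1 (fun g => (hR g).2 (all g))
    exact ⟨e.trans MulEquiv.prodComm⟩
  right
  push Not at all
  obtain ⟨g, hg⟩ := all
  by_cases hno : ∀ x, orderOf x = 2 → Commute c x
  · left
    obtain ⟨hz, hV⟩ := d.noInv hst hu hno g hg
    obtain ⟨z, hzz⟩ : ∃ z, g * g = z := ⟨_, rfl⟩
    rw [hzz] at hz
    have hzo : orderOf z = 2 := by rcases hz with rfl | rfl | rfl; exacts [d.hs, d.ht, d.hu]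
    have hzc : Commute c z := by rcases hz with rfl | rfl | rfl; exacts [d.cs, d.ct, d.cu]
    obtain ⟨w, hw, hzw⟩ : ∃ w, (w = s ∨ w = t ∨ w = u) ∧ z ≠ w := by
      by_cases h : z = s
      · exact ⟨t, by simp, h ▸ d.st⟩
      · exact ⟨s, by simp, h⟩
    have hwo : orderOf w = 2 := by rcases hw with rfl | rfl | rfl; exacts [d.hs, d.ht, d.hu]
    have hwc : Commute c w := by rcases hw with rfl | rfl | rfl; exacts [d.cs, d.ct, d.cu]
    have hzw' : Commute z w := hzz ▸ (hV w hw).mul_left (hV w hw)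
    have z2 : z * z = 1 := by rw [← sq, ← hzo, pow_orderOf_eq_one]
    have hgc : g * c = c⁻¹ * g := by
      have := d.notComm hg
      rwa [mul_inv_eq_iff_eq_mul] at this
    obtain ⟨f, f1, f2, f3, f4⟩ := qhom (c * z) g (ord6 c z d.hc hzo hzc) (by
      rw [hzz, hzc.mul_pow, ← d.hc, pow_orderOf_eq_one, d.hc, pow_succ, sq, z2]; simp) (by
      rw [← mul_assoc, hgc, mul_assoc, (hV z hz).eq, ← mul_assoc, hzc.mul_inv,
        ← eq_inv_of_mul_eq_one_left z2])
    obtain ⟨e, e1, e2, e3⟩ := zhom 2 w hwo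
    have hfc : f.range ≤ Subgroup.centralizer {w} := by
      have ha : Subgroup.zpowers (c * z) ≤ Subgroup.centralizer {w} := by
        rw [Subgroup.zpowers_le, Subgroup.mem_centralizer_singleton_iff]
        exact hwc.mul_left hzw'
      have hgw : g ∈ Subgroup.centralizer {w} := by
        rw [Subgroup.mem_centralizer_singleton_iff]
        exact hV w hw
      intro y hy
      rcases f4 y hy with h | ⟨v, hv, rfl⟩
      · exact ha h
      · exact mul_mem hgw (ha hv)
    have hwf : w ∉ f.range := by
      intro h
      rcases f4 w h with h | ⟨v, hv, h⟩
      · exact hzw ((h6 z hzo hzc).1 w hwo h).symm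
      · apply hg
        have hcv : Commute c v := by
          obtain ⟨k, rfl⟩ := Subgroup.mem_zpowers_iff.1 hv
          exact ((Commute.refl c).mul_right hzc).zpow_right k
        have : g = w * v⁻¹ := by rw [h]; simp
        rw [this]
        exact hwc.mul_right hcv.inv_right
    obtain ⟨F, F1, F2, F3, F4, -⟩ := prodhom e f e2 f1 (by
      intro a b
      have ha : e a ∈ Subgroup.zpowers w := e3 ▸ ⟨a, rfl⟩
      obtain ⟨k, hk⟩ := Subgroup.mem_zpowers_iff.1 ha
      rw [← hk]
      have h1 : Commute (f b) w := Subgroup.mem_centralizer_singleton_iff.1 (hfc ⟨b, rfl⟩)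
      exact h1.symm.zpow_left k) (by
      intro y h1 h2
      rw [e3] at h1
      obtain ⟨l, rfl⟩ := Subgroup.mem_zpowers_iff.1 h1
      rcases zp2 w hwo l with h | h
      · exact h
      · rw [h] at h2
        exact absurd h2 hwf)
    apply isoOf F F1
    have hzp : Subgroup.zpowers (c * z) ≤ F.range := Subgroup.zpowers_le.2 (F3 f2)
    have hwF : w ∈ F.range := F2 (e3 ▸ Subgroup.mem_zpowers w)
    obtain ⟨m1, m2, m3⟩ := d.vmem hst hu z w hz hw hzw F.range (hzp (h6 z hzo hzc).2.2) hwF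
    have hCF : ∀ y, Commute c y → y ∈ F.range := fun y hy =>
      d.MM_mem _ (hzp (h6 z hzo hzc).2.1) m1 m2 m3 (hM y hy)
    intro y
    by_cases hy : Commute c y
    · exact hCF y hy
    · exact (F.range.mul_mem_cancel_left (F3 f3)).1 (hCF _ (d.idx2 hg hy))
  · right
    push Not at hno
    obtain ⟨x, hx, hxc⟩ := hno
    refine semiOf F F1 ⟨?_⟩ x (by rwa [hR]) hx ?_
    · intro y hy g
      rw [hR] at hy ⊢
      exact d.conjComm g y hy
    · intro y
      rw [hR, hR]
      by_cases hy : Commute c y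
      · exact Or.inl hy
      · exact Or.inr (d.idx2 hy hxc)

theorem caseB2 (hst : s * t = t * s) (hu : u = s * t) (q : G) (hqc : Commute c q)
    (hq : orderOf q = 3) (hqn : ∀ i, orderOf i = 2 → ¬ Commute q i) (hqs : q * s * q⁻¹ = t) :
    Nonempty (G ≃* Multiplicative (ZMod 3) × alternatingGroup (Fin 4)) ∨
    (∃ φ : Multiplicative (ZMod 2) →*
        MulAut (Multiplicative (ZMod 3) × alternatingGroup (Fin 4)),
      Nonempty (G ≃* (Multiplicative (ZMod 3) × alternatingGroup (Fin 4)) ⋊[φ]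
        Multiplicative (ZMod 2))) := by
  have hqt : q * t * q⁻¹ = u := by
    rcases d.conjI q t d.ht d.ct with h | h | h
    · exfalso
      apply hqn u d.hu
      rw [commute_iff_conj, hu]
      calc q * (s * t) * q⁻¹ = (q * s * q⁻¹) * (q * t * q⁻¹) := by group
        _ = s * t := by rw [hqs, h, hst]
    · exact absurd ((commute_iff_conj _ _).2 h) (hqn t d.ht)
    · exact h
  have hqu : q * u * q⁻¹ = s := by
    calc q * u * q⁻¹ = (q * s * q⁻¹) * (q * t * q⁻¹) := by rw [hu]; group
      _ = s := by rw [hqs, hqt, hu, hst, ← mul_assoc, d.tt, one_mul]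
  obtain ⟨e, e1, e2, e3⟩ := zhom 3 c d.hc
  obtain ⟨f, f1, f2, f3, f4, f5⟩ := a4hom q s t hq d.hs d.ht d.st hst
    (mul_inv_eq_iff_eq_mul.1 hqs) (hu ▸ mul_inv_eq_iff_eq_mul.1 hqt)
  have hfc : f.range ≤ Subgroup.centralizer {c} := by
    apply f5 <;> rw [Subgroup.mem_centralizer_singleton_iff]
    exacts [hqc.symm, d.cs.symm, d.ct.symm]
  obtain ⟨F, F1, F2, F3, F4⟩ := prodhom' e f e2 f1 (by
    intro a b
    have : e a ∈ Subgroup.zpowers c := e3 ▸ ⟨a, rfl⟩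
    obtain ⟨k, hk⟩ := Subgroup.mem_zpowers_iff.1 this
    rw [← hk]
    have h1 : Commute (f b) c := Subgroup.mem_centralizer_singleton_iff.1 (hfc ⟨b, rfl⟩)
    exact h1.symm.zpow_left k) (by
    intro b hb
    have : b ∈ Subgroup.center (alternatingGroup (Fin 4)) := by
      rw [Subgroup.mem_center_iff]; exact fun g => (hb g).symm
    rw [alternatingGroup.center_eq_bot (by simp)] at this
    simpa using this)
  have hcF : c ∈ F.range := F2 (e3 ▸ Subgroup.mem_zpowers c)
  have hle : F.range ≤ Subgroup.centralizer {c} := by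
    apply F4 _ _ hfc
    rw [e3, Subgroup.zpowers_le, Subgroup.mem_centralizer_singleton_iff]
  have huF : u ∈ F.range := hu ▸ F.range.mul_mem (F3 f3) (F3 f4)
  have hR : ∀ g, g ∈ F.range ↔ Commute c g := by
    intro g
    constructor
    · intro h
      exact ((Subgroup.mem_centralizer_singleton_iff).1 (hle h)).symm
    · intro h
      have fin : ∀ g, Commute c g → g * s * g⁻¹ = s → g ∈ F.range := by
        intro g h hs
        exact d.MM_mem _ hcF (F3 f3) (F3 f4) huF
          (d.MM_of' g s h d.hs ((commute_iff_conj _ _).2 hs))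
      rcases d.conjI g s d.hs d.cs with h1 | h1 | h1
      · exact fin g h h1
      · have := fin (q⁻¹ * g) (hqc.inv_right.mul_right h) (by
          calc q⁻¹ * g * s * (q⁻¹ * g)⁻¹ = q⁻¹ * (g * s * g⁻¹) * q := by group
            _ = s := by rw [h1, ← hqs]; group)
        exact (F.range.mul_mem_cancel_left (F.range.inv_mem (F3 f2))).1 this
      · have := fin (q * g) (hqc.mul_right h) (by
          calc q * g * s * (q * g)⁻¹ = q * (g * s * g⁻¹) * q⁻¹ := by group
            _ = s := by rw [h1, hqu])
        exact (F.range.mul_mem_cancel_left (F3 f2)).1 this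
  by_cases all : ∀ g, Commute c g
  · left
    exact isoOf F F1 (fun g => (hR g).2 (all g))
  right
  push Not at all
  obtain ⟨g, hg⟩ := all
  by_cases hno : ∀ x, orderOf x = 2 → Commute c x
  · exfalso
    have hqg : ¬ Commute c (q * g) := by
      intro h
      apply hg
      have := hqc.inv_right.mul_right h
      simpa using this
    have h1 := (d.noInv hst hu hno g hg).2 s (Or.inl rfl)
    have h2 := (d.noInv hst hu hno (q * g) hqg).2 s (Or.inl rfl)
    apply hqn s d.hs
    have := h2.mul_left h1.inv_left
    simpa using this
  · push Not at hno
    obtain ⟨x, hx, hxc⟩ := hno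
    refine semiOf F F1 ⟨?_⟩ x (by rwa [hR]) hx ?_
    · intro y hy g
      rw [hR] at hy ⊢
      exact d.conjComm g y hy
    · intro y
      rw [hR, hR]
      by_cases hy : Commute c y
      · exact Or.inl hy
      · exact Or.inr (d.idx2 hy hxc)

end Dat

end helpers


/-- Let `G` be a finite group with `π_e(G) ⊆ {1,2,3,4,6}` which has exactly three cyclic
subgroups of order 6, two of which intersect in a subgroup of order 3. Then `G` is
isomorphic to `Z_2 × Z_6`, `Z_3 × S_3`, `Z_2 × Dic_3`, `(Z_6 × Z_2) ⋊_φ Z_2`,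
`Z_2 × Z_2 × S_3`, `Z_3 × A_4` or `(Z_3 × A_4) ⋊_φ Z_2`. -/
theorem classification_of_groups_with_three_cyclic_subgroups_of_order_six
    (G : Type) [Group G] [Finite G]
    (horders : ∀ g : G, orderOf g ∈ ({1, 2, 3, 4, 6} : Set ℕ))
    (hthree : {H : Subgroup G | IsCyclic H ∧ Nat.card H = 6}.ncard = 3)
    (hexists : ∃ H K : Subgroup G, IsCyclic H ∧ Nat.card H = 6 ∧ IsCyclic K ∧
      Nat.card K = 6 ∧ H ≠ K ∧ Nat.card (H ⊓ K : Subgroup G) = 3) :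
    Nonempty (G ≃* Multiplicative (ZMod 2) × Multiplicative (ZMod 6)) ∨
    Nonempty (G ≃* Multiplicative (ZMod 3) × Equiv.Perm (Fin 3)) ∨
    Nonempty (G ≃* Multiplicative (ZMod 2) × QuaternionGroup 3) ∨
    (∃ φ : Multiplicative (ZMod 2) →*
        MulAut (Multiplicative (ZMod 6) × Multiplicative (ZMod 2)),
      Nonempty (G ≃* (Multiplicative (ZMod 6) × Multiplicative (ZMod 2)) ⋊[φ]
        Multiplicative (ZMod 2))) ∨
    Nonempty (G ≃* Multiplicative (ZMod 2) × Multiplicative (ZMod 2) × Equiv.Perm (Fin 3)) ∨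
    Nonempty (G ≃* Multiplicative (ZMod 3) × alternatingGroup (Fin 4)) ∨
    (∃ φ : Multiplicative (ZMod 2) →*
        MulAut (Multiplicative (ZMod 3) × alternatingGroup (Fin 4)),
      Nonempty (G ≃* (Multiplicative (ZMod 3) × alternatingGroup (Fin 4)) ⋊[φ]
        Multiplicative (ZMod 2))) := by
  obtain ⟨c, s, t, u, d, ⟨hst, hu⟩ | ⟨hst, hu⟩⟩ := getDat horders hthree hexists
  · by_cases hM : ∀ g, Commute c g → MM c s t u g
    · have := d.caseB1 hst hu hM
      tauto
    · push Not at hM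
      obtain ⟨q, hqc, hqM⟩ := hM
      obtain ⟨hq, hqn⟩ := (d.MM_of q hqc).resolve_left hqM
      rcases d.conjI q s d.hs d.cs with h | h | h
      · exact absurd ((commute_iff_conj _ _).2 h) (hqn s d.hs)
      · have := d.caseB2 hst hu q hqc hq hqn h
        tauto
      · obtain ⟨d', hsu, ht⟩ := d.swap hst hu
        have := d'.caseB2 hsu ht q hqc hq hqn h
        tauto
  · have := d.caseA hst hu
    tauto
end

section
/- Each of the five groups Z_2 × Z_6, Z_3 × S_3, Z_2 × Dic_3 (Dic_3 the dicyclic group of order 12), Z_2 × Z_2 × S_3, and Z_3 × A_4 satisfies all of the following: its set of element orders is contained in {1,2,3,4,6}; it has exactly three cyclic subgroups of order 6; and there exist two of its cyclic subgroups of order 6 whose intersection has order 3. -/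
/-- A group has the property of interest if its element orders lie in `{1,2,3,4,6}`,
it has exactly three cyclic subgroups of order 6, and two of its cyclic subgroups of
order 6 intersect in a subgroup of order 3. -/
def HasThreeCyclicSixProperty (G : Type*) [Group G] : Prop :=
  (∀ g : G, orderOf g ∈ ({1, 2, 3, 4, 6} : Set ℕ)) ∧
  {H : Subgroup G | IsCyclic H ∧ Nat.card H = 6}.ncard = 3 ∧
  ∃ H K : Subgroup G, IsCyclic H ∧ Nat.card H = 6 ∧ IsCyclic K ∧
    Nat.card K = 6 ∧ H ≠ K ∧ Nat.card (H ⊓ K : Subgroup G) = 3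

theorem six_orderOf {G : Type*} [Group G] {x : G} (h6 : x ^ 6 = 1) (h2 : x ^ 2 ≠ 1)
    (h3 : x ^ 3 ≠ 1) : orderOf x = 6 := by
  have hd : orderOf x ∣ 6 := orderOf_dvd_of_pow_eq_one h6
  have hm : orderOf x ∈ Nat.divisors 6 := by simp [hd]
  rw [show Nat.divisors 6 = {1, 2, 3, 6} by decide] at hm
  simp only [Finset.mem_insert, Finset.mem_singleton] at hm
  have e := pow_orderOf_eq_one x
  rcases hm with h | h | h | h
  · rw [h, pow_one] at e; simp [e] at h2
  · rw [h] at e; exact absurd e h2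
  · rw [h] at e; exact absurd e h3
  · exact h

theorem zpowers_ne_of {G : Type*} [Group G] {a b : G} (ha : orderOf a = 6)
    (h : ∀ k : Fin 6, b ≠ a ^ (k : ℕ)) : Subgroup.zpowers a ≠ Subgroup.zpowers b := by
  intro e
  have hb : b ∈ Subgroup.zpowers a := by rw [e]; exact Subgroup.mem_zpowers b
  have hfin : IsOfFinOrder a := orderOf_pos_iff.mp (by omega)
  classical
  rw [← hfin.mem_powers_iff_mem_zpowers, hfin.mem_powers_iff_mem_range_orderOf] at hb
  simp only [Finset.mem_image, Finset.mem_range, ha] at hb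
  obtain ⟨k, hk, rfl⟩ := hb
  exact h ⟨k, hk⟩ rfl

theorem zpowers_pow_five {G : Type*} [Group G] {a : G} (ha : a ^ 6 = 1) :
    Subgroup.zpowers (a ^ 5) = Subgroup.zpowers a := by
  have : a ^ 5 = a⁻¹ := by
    rw [eq_inv_iff_mul_eq_one, ← pow_succ]; exact ha
  rw [this, Subgroup.zpowers_inv]

theorem three_six_criterion {G : Type*} [Group G] (a b c : G)
    (hall : ∀ g : G, g ^ 4 = 1 ∨ g ^ 6 = 1)
    (ha : a ^ 6 = 1 ∧ a ^ 2 ≠ 1 ∧ a ^ 3 ≠ 1)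
    (hb : b ^ 6 = 1 ∧ b ^ 2 ≠ 1 ∧ b ^ 3 ≠ 1)
    (hc : c ^ 6 = 1 ∧ c ^ 2 ≠ 1 ∧ c ^ 3 ≠ 1)
    (hab : ∀ k : Fin 6, b ≠ a ^ (k : ℕ))
    (hac : ∀ k : Fin 6, c ≠ a ^ (k : ℕ))
    (hbc : ∀ k : Fin 6, c ≠ b ^ (k : ℕ))
    (h2 : a ^ 2 = b ^ 2)
    (hex : ∀ g : G, g ^ 6 = 1 → g ^ 2 ≠ 1 → g ^ 3 ≠ 1 →
      g = a ∨ g = a ^ 5 ∨ g = b ∨ g = b ^ 5 ∨ g = c ∨ g = c ^ 5) :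
    HasThreeCyclicSixProperty G := by
  have oa := six_orderOf ha.1 ha.2.1 ha.2.2
  have ob := six_orderOf hb.1 hb.2.1 hb.2.2
  have oc := six_orderOf hc.1 hc.2.1 hc.2.2
  have nab := zpowers_ne_of oa hab
  have nac := zpowers_ne_of oa hac
  have nbc := zpowers_ne_of ob hbc
  refine ⟨fun g => ?_, ?_, Subgroup.zpowers a, Subgroup.zpowers b, inferInstance, ?_,
    inferInstance, ?_, nab, ?_⟩
  · rcases hall g with h | h
    · have hm : orderOf g ∈ Nat.divisors 4 := by
        simp [orderOf_dvd_of_pow_eq_one h]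
      rw [show Nat.divisors 4 = {1, 2, 4} by decide] at hm
      simp only [Finset.mem_insert, Finset.mem_singleton] at hm
      simp only [Set.mem_insert_iff, Set.mem_singleton_iff]
      omega
    · have hm : orderOf g ∈ Nat.divisors 6 := by
        simp [orderOf_dvd_of_pow_eq_one h]
      rw [show Nat.divisors 6 = {1, 2, 3, 6} by decide] at hm
      simp only [Finset.mem_insert, Finset.mem_singleton] at hm
      simp only [Set.mem_insert_iff, Set.mem_singleton_iff]
      omega
  · have hS : {H : Subgroup G | IsCyclic H ∧ Nat.card H = 6} =
        {Subgroup.zpowers a, Subgroup.zpowers b, Subgroup.zpowers c} := by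
      ext H
      simp only [Set.mem_ofPred_eq, Set.mem_insert_iff, Set.mem_singleton_iff]
      constructor
      · rintro ⟨hcyc, hcard⟩
        obtain ⟨g, rfl⟩ := (Subgroup.isCyclic_iff_exists_zpowers_eq_top H).mp hcyc
        rw [Nat.card_zpowers] at hcard
        have g6 : g ^ 6 = 1 := by rw [← hcard]; exact pow_orderOf_eq_one g
        have g2 : g ^ 2 ≠ 1 := fun h => by
          have := Nat.le_of_dvd (by norm_num) (orderOf_dvd_of_pow_eq_one h); omega
        have g3 : g ^ 3 ≠ 1 := fun h => by
          have := Nat.le_of_dvd (by norm_num) (orderOf_dvd_of_pow_eq_one h); omega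
        rcases hex g g6 g2 g3 with rfl | rfl | rfl | rfl | rfl | rfl
        · exact Or.inl rfl
        · exact Or.inl (zpowers_pow_five ha.1)
        · exact Or.inr (Or.inl rfl)
        · exact Or.inr (Or.inl (zpowers_pow_five hb.1))
        · exact Or.inr (Or.inr rfl)
        · exact Or.inr (Or.inr (zpowers_pow_five hc.1))
      · rintro (rfl | rfl | rfl)
        · exact ⟨inferInstance, by rw [Nat.card_zpowers, oa]⟩
        · exact ⟨inferInstance, by rw [Nat.card_zpowers, ob]⟩
        · exact ⟨inferInstance, by rw [Nat.card_zpowers, oc]⟩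
    rw [hS, Set.ncard_eq_three]
    exact ⟨_, _, _, nab, nac, nbc, rfl⟩
  · rw [Nat.card_zpowers, oa]
  · rw [Nat.card_zpowers, ob]
  · have ca : Nat.card (Subgroup.zpowers a) = 6 := by rw [Nat.card_zpowers, oa]
    have cb : Nat.card (Subgroup.zpowers b) = 6 := by rw [Nat.card_zpowers, ob]
    have : Finite (Subgroup.zpowers a) := Nat.finite_of_card_ne_zero (by omega)
    have : Finite (Subgroup.zpowers b) := Nat.finite_of_card_ne_zero (by omega)
    have d6 : Nat.card (Subgroup.zpowers a ⊓ Subgroup.zpowers b : Subgroup G) ∣ 6 := by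
      rw [← ca]; exact Subgroup.card_dvd_of_le inf_le_left
    have o3 : orderOf (a ^ 2) = 3 := by
      rw [orderOf_pow' a (by norm_num), oa]; rfl
    have d3 : 3 ∣ Nat.card (Subgroup.zpowers a ⊓ Subgroup.zpowers b : Subgroup G) := by
      rw [← o3]
      refine Subgroup.orderOf_dvd_natCard _ (Subgroup.mem_inf.mpr ⟨?_, ?_⟩)
      · exact Subgroup.npow_mem_zpowers a 2
      · rw [h2]; exact Subgroup.npow_mem_zpowers b 2
    have n6 : Nat.card (Subgroup.zpowers a ⊓ Subgroup.zpowers b : Subgroup G) ≠ 6 := by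
      intro h
      apply nab
      have e1 := Subgroup.eq_of_le_of_card_ge
        (inf_le_left : Subgroup.zpowers a ⊓ Subgroup.zpowers b ≤ _) (by omega)
      have e2 := Subgroup.eq_of_le_of_card_ge
        (inf_le_right : Subgroup.zpowers a ⊓ Subgroup.zpowers b ≤ _) (by omega)
      exact e1.symm.trans e2
    have := Nat.le_of_dvd (by norm_num) d6
    obtain ⟨k, hk⟩ := d3
    have : k ≠ 0 := by rintro rfl; rw [hk] at d6; omega
    omega

set_option maxRecDepth 100000
set_option maxHeartbeats 4000000
set_option synthInstance.maxHeartbeats 4000000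
set_option synthInstance.maxSize 10000

theorem case_one : HasThreeCyclicSixProperty (Multiplicative (ZMod 2) × Multiplicative (ZMod 6)) := by
  refine three_six_criterion (Multiplicative.ofAdd (1 : ZMod 2), Multiplicative.ofAdd (2 : ZMod 6)) (Multiplicative.ofAdd (0 : ZMod 2), Multiplicative.ofAdd (5 : ZMod 6)) (Multiplicative.ofAdd (1 : ZMod 2), Multiplicative.ofAdd (5 : ZMod 6)) ?_ ?_ ?_ ?_ ?_ ?_ ?_ ?_ ?_ <;> decide

theorem case_two : HasThreeCyclicSixProperty (Multiplicative (ZMod 3) × Equiv.Perm (Fin 3)) := by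
  refine three_six_criterion (Multiplicative.ofAdd (1 : ZMod 3), Equiv.swap 0 1) (Multiplicative.ofAdd (1 : ZMod 3), Equiv.swap 0 2) (Multiplicative.ofAdd (1 : ZMod 3), Equiv.swap 1 2) ?_ ?_ ?_ ?_ ?_ ?_ ?_ ?_ ?_ <;> decide

theorem case_three : HasThreeCyclicSixProperty (Multiplicative (ZMod 2) × QuaternionGroup 3) := by
  refine three_six_criterion (Multiplicative.ofAdd (1 : ZMod 2), QuaternionGroup.a 2) (Multiplicative.ofAdd (0 : ZMod 2), QuaternionGroup.a 5) (Multiplicative.ofAdd (1 : ZMod 2), QuaternionGroup.a 5) ?_ ?_ ?_ ?_ ?_ ?_ ?_ ?_ ?_ <;> decide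

theorem case_four : HasThreeCyclicSixProperty (Multiplicative (ZMod 2) × Multiplicative (ZMod 2) × Equiv.Perm (Fin 3)) := by
  refine three_six_criterion (Multiplicative.ofAdd (1 : ZMod 2), Multiplicative.ofAdd (0 : ZMod 2), finRotate 3) (Multiplicative.ofAdd (0 : ZMod 2), Multiplicative.ofAdd (1 : ZMod 2), finRotate 3) (Multiplicative.ofAdd (1 : ZMod 2), Multiplicative.ofAdd (1 : ZMod 2), finRotate 3) ?_ ?_ ?_ ?_ ?_ ?_ ?_ ?_ ?_ <;> decide

theorem case_five : HasThreeCyclicSixProperty (Multiplicative (ZMod 3) × alternatingGroup (Fin 4)) := by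
  refine three_six_criterion (Multiplicative.ofAdd (1 : ZMod 3), ⟨Equiv.swap 0 1 * Equiv.swap 2 3, Equiv.Perm.mem_alternatingGroup.mpr (by decide)⟩) (Multiplicative.ofAdd (1 : ZMod 3), ⟨Equiv.swap 0 2 * Equiv.swap 1 3, Equiv.Perm.mem_alternatingGroup.mpr (by decide)⟩) (Multiplicative.ofAdd (1 : ZMod 3), ⟨Equiv.swap 0 3 * Equiv.swap 1 2, Equiv.Perm.mem_alternatingGroup.mpr (by decide)⟩) ?_ ?_ ?_ ?_ ?_ ?_ ?_ ?_ ?_ <;> decide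

/-- Each of the five groups `Z_2 × Z_6`, `Z_3 × S_3`, `Z_2 × Dic_3`, `Z_2 × Z_2 × S_3`
and `Z_3 × A_4` has element orders contained in `{1,2,3,4,6}`, exactly three cyclic
subgroups of order 6, and two cyclic subgroups of order 6 intersecting in a subgroup
of order 3. -/
theorem five_groups_have_three_cyclic_subgroups_of_order_six :
    HasThreeCyclicSixProperty (Multiplicative (ZMod 2) × Multiplicative (ZMod 6)) ∧
    HasThreeCyclicSixProperty (Multiplicative (ZMod 3) × Equiv.Perm (Fin 3)) ∧
    HasThreeCyclicSixProperty (Multiplicative (ZMod 2) × QuaternionGroup 3) ∧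
    HasThreeCyclicSixProperty
      (Multiplicative (ZMod 2) × Multiplicative (ZMod 2) × Equiv.Perm (Fin 3)) ∧
    HasThreeCyclicSixProperty (Multiplicative (ZMod 3) × alternatingGroup (Fin 4)) := by
  exact ⟨case_one, case_two, case_three, case_four, case_five⟩
end

section
/- Let G be a finite group with π_e(G) ⊆ {1,2,3,4,6} which has exactly three cyclic subgroups of order 6, and suppose there exist two cyclic subgroups of order 6 of G whose intersection has order 3. Then |G| ≤ 144. -/
open Finset in
/-- The number of elements of order 6 is at most 6. -/
lemma aux_card_E (G : Type) [Group G] [Fintype G] [DecidableEq G]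
    (hthree : {H : Subgroup G | IsCyclic H ∧ Nat.card H = 6}.ncard = 3) :
    #{g : G | orderOf g = 6} ≤ 6 := by
  classical
  have h1 := Finset.card_le_mul_card_image (f := fun g : G => Subgroup.zpowers g)
    ({g : G | orderOf g = 6} : Finset G) 2 ?_
  · have h2 : #(({g : G | orderOf g = 6} : Finset G).image (fun g : G => Subgroup.zpowers g)) ≤ 3 := by
      rw [← hthree, ← Set.ncard_coe_finset]
      apply Set.ncard_le_ncard _ (Set.toFinite _)
      intro H hH
      simp only [coe_image, Set.mem_image, mem_coe, mem_filter, mem_univ, true_and] at hH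
      obtain ⟨g, hg, rfl⟩ := hH
      exact ⟨inferInstance, by rw [Nat.card_zpowers, hg]⟩
    omega
  · intro H hH
    simp only [mem_image, mem_filter, mem_univ, true_and] at hH
    obtain ⟨h, hh, rfl⟩ := hH
    refine le_trans (Finset.card_le_card (t := {h, h⁻¹}) ?_) Finset.card_le_two
    intro g hg
    simp only [mem_filter, mem_univ, true_and] at hg
    obtain ⟨hg6, hgz⟩ := hg
    have hm : g ∈ Subgroup.zpowers h := hgz ▸ Subgroup.mem_zpowers g
    rw [← mem_powers_iff_mem_zpowers, mem_powers_iff_mem_range_orderOf, hh] at hm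
    simp only [mem_image, mem_range] at hm
    obtain ⟨k, hk, rfl⟩ := hm
    rw [orderOf_pow, hh] at hg6
    simp only [mem_insert, mem_singleton]
    interval_cases k <;> simp at hg6 ⊢
    right
    rw [eq_inv_iff_mul_eq_one, ← pow_succ]; exact orderOf_dvd_iff_pow_eq_one.mp hh.dvd

open Finset in
/-- The centralizer of an element of order 6 has at most 24 elements. -/
lemma aux_card_C (G : Type) [Group G] [Fintype G] [DecidableEq G]
    (horders : ∀ g : G, orderOf g ∈ ({1, 2, 3, 4, 6} : Set ℕ))
    (hE : #{g : G | orderOf g = 6} ≤ 6) (a : G) (ha : orderOf a = 6) :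
    #{g : G | g * a = a * g} ≤ 24 := by
  have key : ∀ g : G, Commute g a → ∃ i ∈ range 4, orderOf (g * a ^ i) = 6 := by
    intro g hg
    have o2 : orderOf (a ^ 2) = 3 := by rw [orderOf_pow, ha]; rfl
    have o3 : orderOf (a ^ 3) = 2 := by rw [orderOf_pow, ha]; rfl
    rcases horders g with h | h | h | h | h
    · exact ⟨1, by simp, by rw [orderOf_eq_one_iff] at h; simpa [h] using ha⟩
    · refine ⟨2, by simp, ?_⟩
      rw [(hg.pow_right 2).orderOf_mul_eq_mul_orderOf_of_coprime (by rw [h, o2]; decide), h, o2]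
    · refine ⟨3, by simp, ?_⟩
      rw [(hg.pow_right 3).orderOf_mul_eq_mul_orderOf_of_coprime (by rw [h, o3]; decide), h, o3]
    · exfalso
      have h12 : orderOf (g * a ^ 2) = 12 := by
        rw [(hg.pow_right 2).orderOf_mul_eq_mul_orderOf_of_coprime (by rw [h, o2]; decide), h, o2]
      have := horders (g * a ^ 2)
      rw [h12] at this
      simp at this
    · exact ⟨0, by simp, by simpa using h⟩
  calc #{g : G | g * a = a * g}
      ≤ #((range 4 ×ˢ ({g : G | orderOf g = 6} : Finset G)).image
          (fun p => p.2 * (a ^ p.1)⁻¹)) := by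
        apply Finset.card_le_card
        intro g hg
        simp only [mem_filter, mem_univ, true_and] at hg
        obtain ⟨i, hi, ho⟩ := key g hg
        simp only [mem_image, mem_product, mem_filter, mem_univ, true_and]
        exact ⟨(i, g * a ^ i), ⟨hi, ho⟩, by simp⟩
    _ ≤ _ := Finset.card_image_le
    _ ≤ 24 := by rw [card_product, card_range]; omega

/-- Let `G` be a finite group with `π_e(G) ⊆ {1,2,3,4,6}` which has exactly three cyclic
subgroups of order 6, two of which intersect in a subgroup of order 3. Then `|G| ≤ 144`. -/
theorem card_le_144_of_three_cyclic_subgroups_of_order_six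
    (G : Type) [Group G] [Finite G]
    (horders : ∀ g : G, orderOf g ∈ ({1, 2, 3, 4, 6} : Set ℕ))
    (hthree : {H : Subgroup G | IsCyclic H ∧ Nat.card H = 6}.ncard = 3)
    (hexists : ∃ H K : Subgroup G, IsCyclic H ∧ Nat.card H = 6 ∧ IsCyclic K ∧
      Nat.card K = 6 ∧ H ≠ K ∧ Nat.card (H ⊓ K : Subgroup G) = 3) :
    Nat.card G ≤ 144 := by
  classical
  have := Fintype.ofFinite G
  obtain ⟨H, -, hH, hH6, -⟩ := hexists
  obtain ⟨⟨a, haH⟩, ha⟩ := IsCyclic.exists_ofOrder_eq_natCard (α := H)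
  rw [Subgroup.orderOf_mk, hH6] at ha
  have hE := aux_card_E G hthree
  have hC := aux_card_C G horders hE a ha
  have h1 := Finset.card_le_mul_card_image (f := fun g : G => g * a * g⁻¹) Finset.univ 24 ?_
  · have h2 : (Finset.univ.image (fun g : G => g * a * g⁻¹)).card ≤ 6 := by
      refine le_trans (Finset.card_le_card ?_) hE
      intro b hb
      simp only [Finset.mem_image, Finset.mem_univ, true_and] at hb
      obtain ⟨g, rfl⟩ := hb
      simp only [Finset.mem_filter, Finset.mem_univ, true_and]
      rw [← ha]
      exact (MulAut.conj g).orderOf_eq a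
    rw [Nat.card_eq_fintype_card, ← Finset.card_univ]
    omega
  · intro b hb
    simp only [Finset.mem_image, Finset.mem_univ, true_and] at hb
    obtain ⟨k, rfl⟩ := hb
    refine le_trans (Finset.card_le_card_of_injOn (fun g => k⁻¹ * g) ?_ ?_) hC
    · intro g hg
      simp only [Finset.coe_filter, Finset.mem_univ, true_and, Set.mem_ofPred_eq] at hg ⊢
      have h3 : g * a = k * a * k⁻¹ * g := by rw [← hg]; group
      change k⁻¹ * g * a = a * (k⁻¹ * g)
      rw [mul_assoc, h3]; group
    · intro x _ y _ h
      exact mul_left_cancel h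
end

section
/- Let G be a finite group with π_e(G) ⊆ {1,2,3,4,6} whose cyclic subgroups of order 6 are exactly the three subgroups ⟨a⟩, ⟨b⟩, ⟨c⟩, where a, b, c have order 6 and a² = b² = c². If both a² and a³ lie in the center Z(G), then G is isomorphic to Z_2 × Z_6. -/
/-- Let `G` be a finite group with `π_e(G) ⊆ {1,2,3,4,6}` whose cyclic subgroups of
order 6 are exactly `⟨a⟩, ⟨b⟩, ⟨c⟩`, where `a, b, c` have order 6 and `a² = b² = c²`.
If both `a²` and `a³` lie in the center of `G`, then `G ≅ Z_2 × Z_6`. -/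
theorem iso_Z2_times_Z6_of_central_powers
    (G : Type) [Group G] [Finite G] (a b c : G)
    (horders : ∀ g : G, orderOf g ∈ ({1, 2, 3, 4, 6} : Set ℕ))
    (ha : orderOf a = 6) (hb : orderOf b = 6) (hc : orderOf c = 6)
    (hab : Subgroup.zpowers a ≠ Subgroup.zpowers b)
    (hac : Subgroup.zpowers a ≠ Subgroup.zpowers c)
    (hbc : Subgroup.zpowers b ≠ Subgroup.zpowers c)
    (hset : {H : Subgroup G | IsCyclic H ∧ Nat.card H = 6} =
      {Subgroup.zpowers a, Subgroup.zpowers b, Subgroup.zpowers c})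
    (hsq1 : a ^ 2 = b ^ 2) (hsq2 : b ^ 2 = c ^ 2)
    (hZ2 : a ^ 2 ∈ Subgroup.center G) (hZ3 : a ^ 3 ∈ Subgroup.center G) :
    Nonempty (G ≃* Multiplicative (ZMod 2) × Multiplicative (ZMod 6)) := by
  have hma : ∀ g : G, g * a = a * g := by
    intro g
    have h2 := Subgroup.mem_center_iff.1 hZ2 g
    have h3 := Subgroup.mem_center_iff.1 hZ3 g
    have h : a = a ^ 3 * (a ^ 2)⁻¹ := by group
    have hc' : a ∈ Subgroup.center G := by
      rw [h]; exact mul_mem hZ3 (inv_mem hZ2)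
    exact Subgroup.mem_center_iff.1 hc' g
  have hcom : ∀ (g : G) (n : ℕ), Commute g (a ^ n) := fun g n =>
    Commute.pow_right (hma g) n
  have o2 : orderOf (a ^ 2) = 3 := by
    rw [orderOf_pow' a (by norm_num), ha]; norm_num
  have o3 : orderOf (a ^ 3) = 2 := by
    rw [orderOf_pow' a (by norm_num), ha]; norm_num
  have ob3 : orderOf (b ^ 3) = 2 := by
    rw [orderOf_pow' b (by norm_num), hb]; norm_num
  have hmem : ∀ g : G, orderOf g = 6 → Subgroup.zpowers g = Subgroup.zpowers a ∨
      Subgroup.zpowers g = Subgroup.zpowers b ∨ Subgroup.zpowers g = Subgroup.zpowers c := by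
    intro g hg
    have : Subgroup.zpowers g ∈ {H : Subgroup G | IsCyclic H ∧ Nat.card H = 6} :=
      ⟨inferInstance, by rw [Nat.card_zpowers, hg]⟩
    rw [hset] at this
    simpa using this
  have heq : ∀ x y : G, orderOf x = 6 → orderOf y = 6 → x ∈ Subgroup.zpowers y →
      Subgroup.zpowers x = Subgroup.zpowers y := by
    intro x y hx hy h
    apply Subgroup.eq_of_le_of_card_ge
    · rwa [Subgroup.zpowers_le]
    · rw [Nat.card_zpowers, Nat.card_zpowers, hx, hy]
  have hb3 : b ^ 3 ∉ Subgroup.zpowers a := by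
    intro h
    apply hab
    refine (heq b a hb ha ?_).symm
    have hh : b = b ^ 3 * (b ^ 2)⁻¹ := by group
    rw [hh, ← hsq1]
    exact mul_mem h (inv_mem (pow_mem (Subgroup.mem_zpowers a) 2))
  set R : Subgroup G := Subgroup.zpowers (b ^ 3) ⊔ Subgroup.zpowers a with hR
  have haR : a ∈ R := (le_sup_right : _ ≤ R) (Subgroup.mem_zpowers a)
  have hb3R : b ^ 3 ∈ R := (le_sup_left : _ ≤ R) (Subgroup.mem_zpowers _)
  have hbR : b ∈ R := by
    have hh : b = b ^ 3 * (b ^ 2)⁻¹ := by group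
    rw [hh, ← hsq1]
    exact mul_mem hb3R (inv_mem (pow_mem haR 2))
  have hcR : c ∈ R := by
    have ox : orderOf (b ^ 3 * a ^ 3) = 2 := by
      apply orderOf_eq_prime
      · rw [(hcom (b ^ 3) 3).mul_pow, ← ob3, pow_orderOf_eq_one, ob3, ← o3, pow_orderOf_eq_one,
          one_mul]
      · intro h
        apply hb3
        rw [eq_inv_of_mul_eq_one_left h]
        exact inv_mem (pow_mem (Subgroup.mem_zpowers a) 3)
    have ox6 : orderOf (b ^ 3 * a ^ 3 * a ^ 2) = 6 := by
      rw [(hcom _ 2).orderOf_mul_eq_mul_orderOf_of_coprime (by rw [ox, o2]; norm_num), ox, o2]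
    have hxm := Subgroup.mem_zpowers (b ^ 3 * a ^ 3 * a ^ 2)
    rcases hmem _ ox6 with h | h | h
    · exfalso
      rw [h, Subgroup.mul_mem_cancel_right _ (pow_mem (Subgroup.mem_zpowers a) 2),
        Subgroup.mul_mem_cancel_right _ (pow_mem (Subgroup.mem_zpowers a) 3)] at hxm
      exact hb3 hxm
    · exfalso
      have ha2 : a ^ 2 ∈ Subgroup.zpowers b := by
        rw [hsq1]; exact pow_mem (Subgroup.mem_zpowers b) 2
      rw [h, Subgroup.mul_mem_cancel_right _ ha2,
        Subgroup.mul_mem_cancel_left _ (pow_mem (Subgroup.mem_zpowers b) 3)] at hxm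
      apply hab
      refine heq a b ha hb ?_
      have hh : a = a ^ 3 * (a ^ 2)⁻¹ := by group
      rw [hh]
      exact mul_mem hxm (inv_mem ha2)
    · have hcx := Subgroup.mem_zpowers c
      rw [← h] at hcx
      exact (Subgroup.zpowers_le.2 (mul_mem (mul_mem hb3R (pow_mem haR 3)) (pow_mem haR 2))) hcx
  have h6 : ∀ g : G, orderOf g = 6 → g ∈ R := by
    intro g hg
    have hgm := Subgroup.mem_zpowers g
    rcases hmem g hg with h | h | h <;> rw [h] at hgm
    · exact (Subgroup.zpowers_le.2 haR) hgm
    · exact (Subgroup.zpowers_le.2 hbR) hgm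
    · exact (Subgroup.zpowers_le.2 hcR) hgm
  have hall : ∀ g : G, g ∈ R := by
    intro g
    have ho := horders g
    simp only [Set.mem_insert_iff, Set.mem_singleton_iff] at ho
    rcases ho with h | h | h | h | h
    · rw [orderOf_eq_one_iff] at h
      rw [h]; exact one_mem R
    · have := h6 (g * a ^ 2) (by
        rw [(hcom _ 2).orderOf_mul_eq_mul_orderOf_of_coprime (by rw [h, o2]; norm_num), h, o2])
      rwa [Subgroup.mul_mem_cancel_right _ (pow_mem haR 2)] at this
    · have := h6 (g * a ^ 3) (by
        rw [(hcom _ 3).orderOf_mul_eq_mul_orderOf_of_coprime (by rw [h, o3]; norm_num), h, o3])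
      rwa [Subgroup.mul_mem_cancel_right _ (pow_mem haR 3)] at this
    · exfalso
      have h12 : orderOf (g * a ^ 2) = 12 := by
        rw [(hcom _ 2).orderOf_mul_eq_mul_orderOf_of_coprime (by rw [h, o2]; norm_num), h, o2]
      have := horders (g * a ^ 2)
      rw [h12] at this
      simp at this
    · exact h6 g h
  have hcc : ∀ (m : Subgroup.zpowers (b ^ 3)) (n : Subgroup.zpowers a),
      Commute ((Subgroup.zpowers (b ^ 3)).subtype m) ((Subgroup.zpowers a).subtype n) := by
    rintro ⟨m, hm⟩ ⟨n, k, rfl⟩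
    exact Commute.zpow_right (hma m) k
  let f := MonoidHom.noncommCoprod _ _ hcc
  have hinj : Function.Injective f := by
    apply MonoidHom.noncommCoprod_injective _ _ _ |>.2
    refine ⟨Subtype.val_injective, Subtype.val_injective, ?_⟩
    rw [Subgroup.range_subtype, Subgroup.range_subtype, Subgroup.disjoint_def]
    rintro x ⟨k, rfl⟩ hx
    have hsq : (b ^ 3) ^ 2 = 1 := by rw [← ob3, pow_orderOf_eq_one]
    rcases Int.even_or_odd' k with ⟨j, rfl | rfl⟩
    · show (b ^ 3) ^ (2 * j) = 1
      rw [zpow_mul, zpow_ofNat, hsq, one_zpow]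
    · exfalso
      apply hb3
      have : (b ^ 3) ^ (2 * j + 1) = b ^ 3 := by
        rw [zpow_add, zpow_mul, zpow_ofNat, hsq, one_zpow, one_mul, zpow_one]
      change (b ^ 3) ^ (2 * j + 1) ∈ _ at hx
      rwa [this] at hx
  have hsurj : Function.Surjective f := by
    rw [← MonoidHom.range_eq_top, MonoidHom.noncommCoprod_range,
      Subgroup.range_subtype, Subgroup.range_subtype, eq_top_iff]
    intro g _
    exact hall g
  have e := MulEquiv.ofBijective f ⟨hinj, hsurj⟩
  have c2 : Nat.card (Subgroup.zpowers (b ^ 3)) = 2 := by rw [Nat.card_zpowers, ob3]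
  have c6 : Nat.card (Subgroup.zpowers a) = 6 := by rw [Nat.card_zpowers, ha]
  have e2 : Multiplicative (ZMod 2) ≃* Subgroup.zpowers (b ^ 3) :=
    mulEquivOfCyclicCardEq (by rw [c2]; simp)
  have e6 : Multiplicative (ZMod 6) ≃* Subgroup.zpowers a :=
    mulEquivOfCyclicCardEq (by rw [c6]; simp)
  exact ⟨e.symm.trans (MulEquiv.prodCongr e2.symm e6.symm)⟩
end

section
/- Let G be a finite group with π_e(G) ⊆ {1,2,3,4,6} whose cyclic subgroups of order 6 are exactly the three subgroups ⟨a⟩, ⟨b⟩, ⟨c⟩, where a, b, c have order 6 and a² = b² = c². If a³ lies in the center Z(G), then |G| ≤ 24. -/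
lemma six_aux {G : Type} [Group G] [Finite G] (a g : G) (ha : orderOf a = 6) (hg : orderOf g = 6)
    (h : Subgroup.zpowers g = Subgroup.zpowers a) :
    g ^ 3 = a ^ 3 ∧ (g ^ 2 = a ^ 2 ∨ g ^ 2 = (a ^ 2) ^ 2) := by
  classical
  have hm : g ∈ Subgroup.zpowers a := h ▸ Subgroup.mem_zpowers g
  rw [mem_zpowers_iff_mem_range_orderOf, ha] at hm
  simp only [Finset.mem_image, Finset.mem_range] at hm
  obtain ⟨n, hn, rfl⟩ := hm
  have a6 : a ^ 6 = 1 := by rw [← ha]; exact pow_orderOf_eq_one a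
  have hred : ∀ k m : ℕ, k % 6 = m % 6 → a ^ k = a ^ m := by
    intro k m hkm
    rw [pow_eq_pow_iff_modEq, ha]; exact hkm
  have h2 : (a ^ n) ^ 2 ≠ 1 := fun h => by
    have := orderOf_dvd_of_pow_eq_one h
    rw [hg] at this; omega
  have h3 : (a ^ n) ^ 3 ≠ 1 := fun h => by
    have := orderOf_dvd_of_pow_eq_one h
    rw [hg] at this; omega
  simp only [← pow_mul] at *
  interval_cases n
  · simp at h2
  · exact ⟨rfl, Or.inl rfl⟩
  · exact absurd a6 h3
  · exact absurd a6 h2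
  · exact absurd (by rw [hred (4*3) 0 (by norm_num), pow_zero]) h3
  · exact ⟨hred _ _ (by norm_num), Or.inr (hred _ _ (by norm_num))⟩

/-- Let `G` be a finite group with `π_e(G) ⊆ {1,2,3,4,6}` whose cyclic subgroups of
order 6 are exactly `⟨a⟩, ⟨b⟩, ⟨c⟩`, where `a, b, c` have order 6 and `a² = b² = c²`.
If `a³` lies in the center of `G`, then `|G| ≤ 24`. -/
theorem card_le_24_of_central_cube
    (G : Type) [Group G] [Finite G] (a b c : G)
    (horders : ∀ g : G, orderOf g ∈ ({1, 2, 3, 4, 6} : Set ℕ))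
    (ha : orderOf a = 6) (hb : orderOf b = 6) (hc : orderOf c = 6)
    (hab : Subgroup.zpowers a ≠ Subgroup.zpowers b)
    (hac : Subgroup.zpowers a ≠ Subgroup.zpowers c)
    (hbc : Subgroup.zpowers b ≠ Subgroup.zpowers c)
    (hset : {H : Subgroup G | IsCyclic H ∧ Nat.card H = 6} =
      {Subgroup.zpowers a, Subgroup.zpowers b, Subgroup.zpowers c})
    (hsq1 : a ^ 2 = b ^ 2) (hsq2 : b ^ 2 = c ^ 2)
    (hZ3 : a ^ 3 ∈ Subgroup.center G) :
    Nat.card G ≤ 24 := by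
  have key : ∀ g : G, orderOf g = 6 → (g ^ 3 = a ^ 3 ∨ g ^ 3 = b ^ 3 ∨ g ^ 3 = c ^ 3) ∧
      (g ^ 2 = a ^ 2 ∨ g ^ 2 = (a ^ 2) ^ 2) := by
    intro g hg
    have hm : Subgroup.zpowers g ∈ {H : Subgroup G | IsCyclic H ∧ Nat.card H = 6} :=
      ⟨inferInstance, by rw [Nat.card_zpowers, hg]⟩
    rw [hset] at hm
    rcases hm with h | h | h
    · have := six_aux a g ha hg h
      exact ⟨Or.inl this.1, this.2⟩
    · have := six_aux b g hb hg h
      rw [← hsq1] at this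
      exact ⟨Or.inr (Or.inl this.1), this.2⟩
    · have := six_aux c g hc hg h
      rw [← hsq2, ← hsq1] at this
      exact ⟨Or.inr (Or.inr this.1), this.2⟩
  have oz : orderOf (a ^ 3) = 2 := by rw [orderOf_pow, ha]; norm_num
  have ot : orderOf (a ^ 2) = 3 := by rw [orderOf_pow, ha]; norm_num
  generalize a ^ 3 = z at *
  generalize a ^ 2 = t at *
  have z2 : z ^ 2 = 1 := by rw [← oz]; exact pow_orderOf_eq_one z
  have t3 : t ^ 3 = 1 := by rw [← ot]; exact pow_orderOf_eq_one t
  have ord3 : ∀ s : G, orderOf s = 3 → s = t ∨ s = t ^ 2 := by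
    intro s hs
    have hcom : Commute z s := (Subgroup.mem_center_iff.mp hZ3 s).symm
    have ho : orderOf (z * s) = 6 := by
      rw [hcom.orderOf_mul_eq_mul_orderOf_of_coprime (by rw [oz, hs]; norm_num), oz, hs]
    have h := (key _ ho).2
    have s3 : s ^ 3 = 1 := by rw [← hs]; exact pow_orderOf_eq_one s
    have e : (s ^ 2) ^ 2 = s := by
      rw [← pow_mul, show 2 * 2 = 3 + 1 from rfl, pow_succ, s3, one_mul]
    have e' : (t ^ 2) ^ 2 = t := by
      rw [← pow_mul, show 2 * 2 = 3 + 1 from rfl, pow_succ, t3, one_mul]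
    rw [hcom.mul_pow, z2, one_mul] at h
    rcases h with h | h
    · right; rw [← h, e]
    · left; rw [← e, h, e']
  have hC : ∀ g : G, Commute g t → (g ^ 3 = 1 ∨ g ^ 3 = z ∨ g ^ 3 = b ^ 3 ∨ g ^ 3 = c ^ 3) ∧
      (g ^ 2 = 1 ∨ g ^ 2 = t ∨ g ^ 2 = t ^ 2) := by
    intro g hg
    have hpow := pow_orderOf_eq_one g
    have h := horders g
    simp only [Set.mem_insert_iff, Set.mem_singleton_iff] at h
    rcases h with h | h | h | h | h
    · rw [h, pow_one] at hpow
      subst hpow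
      simp
    · rw [h] at hpow
      refine ⟨?_, Or.inl hpow⟩
      have ho : orderOf (g * t) = 6 := by
        rw [hg.orderOf_mul_eq_mul_orderOf_of_coprime (by rw [ot, h]; norm_num), ot, h]
      have := (key _ ho).1
      rw [hg.mul_pow, t3, mul_one] at this
      exact Or.inr this
    · rw [h] at hpow
      refine ⟨Or.inl hpow, Or.inr (ord3 _ ?_ )⟩
      rw [orderOf_pow, h]; norm_num
    · exfalso
      have ho : orderOf (g * t) = 12 := by
        rw [hg.orderOf_mul_eq_mul_orderOf_of_coprime (by rw [ot, h]; norm_num), ot, h]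
      have := horders (g * t)
      rw [ho] at this
      simp at this
    · exact ⟨Or.inr (key _ h).1, Or.inr (key _ h).2⟩
  classical
  have hconj : ∀ g : G, g * t * g⁻¹ = t ∨ g * t * g⁻¹ = t ^ 2 := by
    intro g
    apply ord3
    rw [← ot]
    exact (MulAut.conj g).orderOf_eq t
  have hh : ∃ h : G, ∀ g : G, Commute g t ∨ Commute (h⁻¹ * g) t := by
    by_cases hex : ∃ h : G, h * t * h⁻¹ = t ^ 2
    · obtain ⟨h, hh⟩ := hex
      refine ⟨h, fun g => ?_⟩
      rcases hconj g with hg | hg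
      · left; exact mul_inv_eq_iff_eq_mul.mp hg
      · right
        rw [← hh] at hg
        have : g * t = h * t * h⁻¹ * g := mul_inv_eq_iff_eq_mul.mp hg
        change h⁻¹ * g * t = t * (h⁻¹ * g)
        rw [mul_assoc, this]; group
    · refine ⟨1, fun g => Or.inl ?_⟩
      rcases hconj g with hg | hg
      · exact mul_inv_eq_iff_eq_mul.mp hg
      · exact absurd ⟨g, hg⟩ hex
  obtain ⟨h, hh⟩ := hh
  let S : Finset (G × G × G) :=
    ({1, h} : Finset G) ×ˢ (({1, z, b ^ 3, c ^ 3} : Finset G) ×ˢ ({1, t, t ^ 2} : Finset G))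
  have hS : S.card ≤ 24 := by
    have h1 : ({1, h} : Finset G).card ≤ 2 := Finset.card_le_two
    have h2 : ({1, z, b ^ 3, c ^ 3} : Finset G).card ≤ 4 := Finset.card_le_four
    have h3 : ({1, t, t ^ 2} : Finset G).card ≤ 3 := Finset.card_le_three
    simp only [S, Finset.card_product]
    exact Nat.mul_le_mul h1 (Nat.mul_le_mul h2 h3)
  have hsurj : Function.Surjective
      (fun p : S => p.1.1 * (p.1.2.1 * p.1.2.2⁻¹)) := by
    intro g
    rcases hh g with hg | hg
    · have := hC g hg
      refine ⟨⟨(1, g ^ 3, g ^ 2), ?_⟩, ?_⟩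
      · simp only [S, Finset.mem_product, Finset.mem_insert, Finset.mem_singleton]
        exact ⟨Or.inl trivial, this.1, this.2⟩
      · simp only; group
    · have := hC _ hg
      refine ⟨⟨(h, (h⁻¹ * g) ^ 3, (h⁻¹ * g) ^ 2), ?_⟩, ?_⟩
      · simp only [S, Finset.mem_product, Finset.mem_insert, Finset.mem_singleton]
        exact ⟨Or.inr trivial, this.1, this.2⟩
      · simp only
        rw [pow_succ' _ 2, mul_inv_cancel_right, mul_inv_cancel_left]
  calc Nat.card G ≤ Nat.card S := Nat.card_le_card_of_surjective _ hsurj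
    _ = S.card := by simp
    _ ≤ 24 := hS
end

section
/- Let G be a finite group with π_e(G) ⊆ {1,2,3,4,6} whose cyclic subgroups of order 6 are exactly the three subgroups ⟨a⟩, ⟨b⟩, ⟨c⟩, where a, b, c have order 6 and a² = b² = c². If none of a³, b³, c³ lies in the center Z(G), then {a³, b³, c³} is a conjugacy class of G, and the centralizer C_G(a³) has index 3 in G. -/
lemma cube_eq_of_zpowers {G : Type} [Group G] [Finite G] (a y : G) (ha : orderOf a = 6)
    (hy : orderOf y = 6) (h : Subgroup.zpowers y = Subgroup.zpowers a) : y ^ 3 = a ^ 3 := by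
  have hm : y ∈ Subgroup.zpowers a := h ▸ Subgroup.mem_zpowers y
  obtain ⟨k, rfl⟩ := (mem_powers_iff_mem_zpowers.mpr hm)
  simp only at hy ⊢
  have h6 : a ^ 6 = 1 := ha ▸ pow_orderOf_eq_one a
  rcases Nat.even_or_odd' k with ⟨m, rfl | rfl⟩
  · exfalso
    have : (a ^ (2 * m)) ^ 3 = 1 := by
      rw [← pow_mul, show 2 * m * 3 = 6 * m by ring, pow_mul, h6, one_pow]
    have := orderOf_dvd_of_pow_eq_one this
    rw [hy] at this
    omega
  · rw [← pow_mul, show (2 * m + 1) * 3 = 6 * m + 3 by ring, pow_add, pow_mul, h6, one_pow, one_mul]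

lemma zpowers_eq_of_pows {G : Type} [Group G] (a b : G) (h2 : a ^ 2 = b ^ 2) (h3 : a ^ 3 = b ^ 3) :
    a = b := by
  rw [pow_succ, pow_succ b 2, h2] at h3
  exact mul_left_cancel h3

/-- Let `G` be a finite group with `π_e(G) ⊆ {1,2,3,4,6}` whose cyclic subgroups of
order 6 are exactly `⟨a⟩, ⟨b⟩, ⟨c⟩`, where `a, b, c` have order 6 and `a² = b² = c²`.
If none of `a³, b³, c³` lies in the center of `G`, then `{a³, b³, c³}` is a conjugacy
class of `G` and the centralizer of `a³` has index 3 in `G`. -/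
theorem conjugacy_class_of_noncentral_cubes
    (G : Type) [Group G] [Finite G] (a b c : G)
    (horders : ∀ g : G, orderOf g ∈ ({1, 2, 3, 4, 6} : Set ℕ))
    (ha : orderOf a = 6) (hb : orderOf b = 6) (hc : orderOf c = 6)
    (hab : Subgroup.zpowers a ≠ Subgroup.zpowers b)
    (hac : Subgroup.zpowers a ≠ Subgroup.zpowers c)
    (hbc : Subgroup.zpowers b ≠ Subgroup.zpowers c)
    (hset : {H : Subgroup G | IsCyclic H ∧ Nat.card H = 6} =
      {Subgroup.zpowers a, Subgroup.zpowers b, Subgroup.zpowers c})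
    (hsq1 : a ^ 2 = b ^ 2) (hsq2 : b ^ 2 = c ^ 2)
    (hZa : a ^ 3 ∉ Subgroup.center G)
    (hZb : b ^ 3 ∉ Subgroup.center G)
    (hZc : c ^ 3 ∉ Subgroup.center G) :
    ({a ^ 3, b ^ 3, c ^ 3} : Set G) = {y : G | IsConj (a ^ 3) y} ∧
    (Subgroup.centralizer {a ^ 3}).index = 3 := by
  have key : ∀ y : G, orderOf y = 6 → y ^ 3 = a ^ 3 ∨ y ^ 3 = b ^ 3 ∨ y ^ 3 = c ^ 3 := by
    intro y hy
    have hm : Subgroup.zpowers y ∈ {H : Subgroup G | IsCyclic H ∧ Nat.card H = 6} :=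
      ⟨inferInstance, by rw [Nat.card_zpowers, hy]⟩
    rw [hset] at hm
    rcases hm with h | h | h
    · exact Or.inl (cube_eq_of_zpowers a y ha hy h)
    · exact Or.inr (Or.inl (cube_eq_of_zpowers b y hb hy h))
    · exact Or.inr (Or.inr (cube_eq_of_zpowers c y hc hy h))
  have conj : ∀ p : G, orderOf p = 6 → ∀ z, IsConj (p ^ 3) z →
      z = a ^ 3 ∨ z = b ^ 3 ∨ z = c ^ 3 := by
    intro p hp z hz
    obtain ⟨g, rfl⟩ := isConj_iff.mp hz
    rw [← conj_pow]
    apply key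
    rw [← hp]
    exact (MulAut.conj g).orderOf_eq p
  have nc : ∀ z : G, z ∉ Subgroup.center G → ∃ y, IsConj z y ∧ y ≠ z := by
    intro z hz
    by_contra! hcon
    apply hz
    rw [Subgroup.mem_center_iff]
    intro g
    have := hcon (g * z * g⁻¹) (isConj_iff.mpr ⟨g, rfl⟩)
    exact mul_inv_eq_iff_eq_mul.mp this
  have hcl : IsConj (a ^ 3) (b ^ 3) ∧ IsConj (a ^ 3) (c ^ 3) := by
    obtain ⟨x, hx, hx'⟩ := nc _ hZa
    obtain ⟨y, hy, hy'⟩ := nc _ hZb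
    obtain ⟨z, hz, hz'⟩ := nc _ hZc
    rcases conj a ha x hx with rfl | rfl | rfl
    · exact absurd rfl hx'
    · refine ⟨hx, ?_⟩
      rcases conj c hc z hz with rfl | rfl | rfl
      · exact hz.symm
      · exact hx.trans hz.symm
      · exact absurd rfl hz'
    · refine ⟨?_, hx⟩
      rcases conj b hb y hy with rfl | rfl | rfl
      · exact hy.symm
      · exact absurd rfl hy'
      · exact hx.trans hy.symm
  have heq : ({a ^ 3, b ^ 3, c ^ 3} : Set G) = {y : G | IsConj (a ^ 3) y} := by
    ext z
    constructor
    · rintro (rfl | rfl | rfl)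
      · exact IsConj.refl _
      · exact hcl.1
      · exact hcl.2
    · exact fun hz => conj a ha z hz
  refine ⟨heq, ?_⟩
  have h1 : a ^ 3 ≠ b ^ 3 := fun h => hab (by rw [zpowers_eq_of_pows a b hsq1 h])
  have h2 : a ^ 3 ≠ c ^ 3 := fun h => hac (by rw [zpowers_eq_of_pows a c (hsq1.trans hsq2) h])
  have h3 : b ^ 3 ≠ c ^ 3 := fun h => hbc (by rw [zpowers_eq_of_pows b c hsq2 h])
  have hcard : ({a ^ 3, b ^ 3, c ^ 3} : Set G).ncard = 3 :=
    Set.ncard_eq_three.mpr ⟨_, _, _, h1, h2, h3, rfl⟩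
  have hi := MulAction.index_stabilizer (ConjAct G) (a ^ 3)
  have ho : MulAction.orbit (ConjAct G) (a ^ 3) = {y : G | IsConj (a ^ 3) y} := by
    ext z
    rw [ConjAct.mem_orbit_conjAct]
    exact isConj_comm
  rw [ho, ← heq, hcard, ConjAct.stabilizer_eq_centralizer] at hi
  exact hi
end

section
/- Let G be a finite group with π_e(G) = {1, 2, 4, 8} that has exactly one cyclic subgroup of order 8. Then |G| = 8 or |G| = 16. -/
theorem aux_key {G : Type} [Group G] (x y : G) (hx4 : x ^ 4 ≠ 1) (hx8 : x ^ 8 = 1)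
    (hC : ∀ g : G, g ^ 4 ≠ 1 → g ∈ Subgroup.zpowers x)
    (h : y * x * y⁻¹ = x ∨ y * x * y⁻¹ = x ^ 5) : y ∈ Subgroup.zpowers x := by
  by_cases hy : y ^ 4 = 1
  · have hmem : x * y ∈ Subgroup.zpowers x := by
      apply hC
      obtain ⟨k, hk, hk2, hk3⟩ : ∃ k : ℕ, y * x * y⁻¹ = x ^ k ∧ x ^ (k * k) = x ∧
          x ^ ((k + 1) + (k + 1)) = x ^ 4 := by
        rcases h with h | h
        · exact ⟨1, by simpa using h, by simp, by norm_num⟩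
        · refine ⟨5, h, ?_, ?_⟩
          · rw [show 5 * 5 = 8 * 3 + 1 by norm_num, pow_succ, pow_mul, hx8]; simp
          · rw [show 5 + 1 + (5 + 1) = 8 + 4 by norm_num, pow_add, hx8, one_mul]
      have h1 : y * x = x ^ k * y := by rw [← hk]; group
      have h2 : Commute (y ^ 2) x := by
        have : y ^ 2 * x * (y ^ 2)⁻¹ = x := by
          calc y ^ 2 * x * (y ^ 2)⁻¹ = y * (y * x * y⁻¹) * y⁻¹ := by
                rw [pow_two]; group
            _ = (y * x * y⁻¹) ^ k := by rw [hk, conj_pow.symm, hk]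
            _ = x := by rw [hk, ← pow_mul, hk2]
        exact mul_inv_eq_iff_eq_mul.mp this
      have h3 : (x * y) ^ 2 = x ^ (k + 1) * y ^ 2 := by
        calc (x * y) ^ 2 = x * (y * x) * y := by rw [pow_two]; group
          _ = x ^ (k + 1) * y ^ 2 := by rw [h1, pow_succ' x, pow_two y]; group
      have h4 : (x * y) ^ 4 = x ^ 4 := by
        rw [show 4 = 2 * 2 by norm_num, pow_mul, h3,
          (h2.symm.pow_left (k + 1)).mul_pow, ← pow_mul, ← pow_mul, mul_two, hk3]
        simp [hy]
      rw [h4]; exact hx4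
    exact (Subgroup.mul_mem_cancel_left _ (Subgroup.mem_zpowers x)).mp hmem
  · exact hC y hy

/-- Let `G` be a finite group with `π_e(G) = {1, 2, 4, 8}` that has exactly one cyclic
subgroup of order 8. Then `|G| = 8` or `|G| = 16`. -/
theorem card_eq_8_or_16_of_unique_cyclic_subgroup_of_order_eight
    (G : Type) [Group G] [Finite G]
    (horders : {n : ℕ | ∃ g : G, orderOf g = n} = ({1, 2, 4, 8} : Set ℕ))
    (hunique : {H : Subgroup G | IsCyclic H ∧ Nat.card H = 8}.ncard = 1) :
    Nat.card G = 8 ∨ Nat.card G = 16 := by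
  obtain ⟨x, hx⟩ : ∃ g : G, orderOf g = 8 := by
    have : (8 : ℕ) ∈ {n : ℕ | ∃ g : G, orderOf g = n} := by rw [horders]; simp
    exact this
  have hx8 : x ^ 8 = 1 := by rw [← hx]; exact pow_orderOf_eq_one x
  have hx4 : x ^ 4 ≠ 1 := by
    intro h
    have := orderOf_dvd_of_pow_eq_one h
    rw [hx] at this
    norm_num at this
  obtain ⟨H, hH⟩ := Set.ncard_eq_one.mp hunique
  have hmem : ∀ g : G, orderOf g = 8 → Subgroup.zpowers g = H := by
    intro g hg
    have : Subgroup.zpowers g ∈ {H : Subgroup G | IsCyclic H ∧ Nat.card H = 8} :=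
      ⟨inferInstance, by rw [Nat.card_zpowers, hg]⟩
    rw [hH] at this
    exact this
  have hC : ∀ g : G, g ^ 4 ≠ 1 → g ∈ Subgroup.zpowers x := by
    intro g hg
    have : orderOf g ∈ ({1, 2, 4, 8} : Set ℕ) := by rw [← horders]; exact ⟨g, rfl⟩
    have h8 : orderOf g = 8 := by
      by_contra hne
      apply hg
      apply orderOf_dvd_iff_pow_eq_one.mp
      rcases this with h | h | h | h
      · rw [h]; norm_num
      · rw [h]; norm_num
      · rw [h]
      · exact absurd h hne
    rw [hmem x hx, ← hmem g h8]
    exact Subgroup.mem_zpowers g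
  classical
  have hact : ∀ y : G, ∃ k : ℕ, (k = 1 ∨ k = 3 ∨ k = 5 ∨ k = 7) ∧ y * x * y⁻¹ = x ^ k := by
    intro y
    have h4 : (y * x * y⁻¹) ^ 4 ≠ 1 := by
      rw [conj_pow]; simpa using hx4
    have hz := hC _ h4
    rw [← mem_powers_iff_mem_zpowers, mem_powers_iff_mem_range_orderOf, hx] at hz
    simp only [Finset.mem_image, Finset.mem_range] at hz
    obtain ⟨k, hk, hk'⟩ := hz
    refine ⟨k, ?_, hk'.symm⟩
    by_contra hcon
    apply h4
    obtain ⟨m, rfl⟩ : ∃ m, k = 2 * m := ⟨k / 2, by omega⟩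
    rw [← hk', ← pow_mul, show 2 * m * 4 = 8 * m by ring, pow_mul, hx8, one_pow]
  have hkey := fun y => aux_key x y hx4 hx8 hC
  have hact2 : ∀ y : G, y ∉ Subgroup.zpowers x →
      ∃ k : ℕ, (k = 3 ∨ k = 7) ∧ y * x * y⁻¹ = x ^ k := by
    intro y hy
    obtain ⟨k, hk, h⟩ := hact y
    refine ⟨k, ?_, h⟩
    rcases hk with rfl | rfl | rfl | rfl
    · exact absurd (hkey y (Or.inl (by simpa using h))) hy
    · simp
    · exact absurd (hkey y (Or.inr h)) hy
    · simp
  have hcard : Nat.card (Subgroup.zpowers x) = 8 := by rw [Nat.card_zpowers, hx]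
  have hmul := (Subgroup.zpowers x).card_mul_index
  rw [hcard] at hmul
  by_cases htop : ∀ a, a ∈ Subgroup.zpowers x
  · left
    have : Subgroup.zpowers x = ⊤ := (Subgroup.eq_top_iff' _).mpr htop
    rw [this, Subgroup.index_top] at hmul
    omega
  · right
    push Not at htop
    obtain ⟨a, ha⟩ := htop
    have : (Subgroup.zpowers x).index = 2 := by
      rw [Subgroup.index_eq_two_iff_exists_notMem_and]
      refine ⟨a, ha, fun b => ?_⟩
      by_cases hb : b ∈ Subgroup.zpowers x
      · exact Or.inr hb
      left
      obtain ⟨k, hk, h⟩ := hact2 a ha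
      obtain ⟨l, hl, h'⟩ := hact2 b hb
      have hba : b * a * x * (b * a)⁻¹ = x ^ (l * k) := by
        calc b * a * x * (b * a)⁻¹ = b * (a * x * a⁻¹) * b⁻¹ := by group
          _ = x ^ (l * k) := by rw [h, ← conj_pow, h', pow_mul]
      have e : ∀ q r, x ^ (8 * q + r) = x ^ r := by
        intro q r
        rw [pow_add, pow_mul, hx8, one_pow, one_mul]
      apply hkey
      rw [hba]
      rcases hk with rfl | rfl <;> rcases hl with rfl | rfl
      · left; simpa using e 1 1
      · right; exact e 2 5
      · right; exact e 2 5
      · left; simpa using e 6 1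
    rw [this] at hmul
    omega
end

section
/- There is no finite group G of order 32 such that π_e(G) = {1, 2, 4, 8} and G has exactly one cyclic subgroup of order 8. -/
theorem aux_sq {G : Type} [Group G] (a : G) (ha : orderOf a = 8)
    (h8 : ∀ g : G, g ^ 8 = 1) (g : G) (k : ℕ) (hk : g ^ 2 = a ^ k) :
    k % 4 = 0 ∨ orderOf g = 8 := by
  have h1 : 8 ∣ k * 4 := by
    rw [← ha, orderOf_dvd_iff_pow_eq_one, pow_mul, ← hk, ← pow_mul]
    exact h8 g
  by_cases h : k % 4 = 0
  · exact Or.inl h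
  right
  have : orderOf g = 2 ^ (2 + 1) := by
    refine orderOf_eq_prime_pow ?_ (h8 g)
    intro h4
    have h2 : 8 ∣ k * 2 := by
      rw [← ha, orderOf_dvd_iff_pow_eq_one, pow_mul, ← hk, ← pow_mul]
      exact h4
    omega
  simpa using this

theorem aux_main_s14 {G : Type} [Group G] [Finite G] (hG : Nat.card G = 32) (a : G)
    (ha : orderOf a = 8) (h8 : ∀ g : G, g ^ 8 = 1)
    (hu : ∀ g : G, orderOf g = 8 → g ∈ Subgroup.zpowers a) : False := by
  classical
  have hmem : ∀ g ∈ Subgroup.zpowers a, ∃ k < 8, g = a ^ k := by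
    intro g hg
    rw [mem_zpowers_iff_mem_range_orderOf, ha] at hg
    simp only [Finset.mem_image, Finset.mem_range] at hg
    obtain ⟨k, hk, h⟩ := hg
    exact ⟨k, hk, h.symm⟩
  have hconj : ∀ x : G, ∃ e < 8, e % 2 = 1 ∧ x * a * x⁻¹ = a ^ e := by
    intro x
    have ho : orderOf (x * a * x⁻¹) = 8 := by
      rw [← ha]; exact orderOf_injective (MulAut.conj x).toMonoidHom (MulAut.conj x).injective a
    obtain ⟨e, he, h⟩ := hmem _ (hu _ ho)
    refine ⟨e, he, ?_, h⟩
    by_contra hc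
    have : orderOf (a ^ e) ∣ 4 := by
      rw [orderOf_dvd_iff_pow_eq_one, ← pow_mul, ← orderOf_dvd_iff_pow_eq_one, ha]
      omega
    rw [← h, ho] at this
    omega
  have hn : (Subgroup.zpowers a).Normal := by
    constructor
    intro n hn g
    obtain ⟨k, -, rfl⟩ := hmem n hn
    obtain ⟨e, -, -, he⟩ := hconj g
    rw [← conj_pow, he, ← pow_mul]
    exact Subgroup.npow_mem_zpowers a _
  have hidx : (Subgroup.zpowers a).index = 4 := by
    have := (Subgroup.zpowers a).card_mul_index
    rw [Nat.card_zpowers, ha, hG] at this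
    omega
  -- the key step
  have key : ∀ x : G, ∀ e k : ℕ, x * a * x⁻¹ = a ^ e → e % 4 = 1 → x ^ 2 = a ^ k →
      x ∈ Subgroup.zpowers a := by
    intro x e k hx he hk
    rcases aux_sq a ha h8 x k hk with h | h
    · have hxa : x * a = a ^ e * x := by rw [← hx]; group
      have : (a * x) ^ 2 = a ^ (1 + e + k) := by
        calc (a * x) ^ 2 = a * (x * a) * x := by rw [pow_two]; group
          _ = a * a ^ e * x ^ 2 := by rw [hxa, pow_two]; group
          _ = _ := by rw [hk, pow_add, pow_add, pow_one]
      rcases aux_sq a ha h8 (a * x) _ this with h' | h'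
      · omega
      · exact (Subgroup.mul_mem_cancel_left _ (Subgroup.mem_zpowers a)).1 (hu _ h')
    · exact hu _ h
  have hK : ∀ x : G, ∀ e : ℕ, x * a * x⁻¹ = a ^ e → e % 4 = 1 → x ∈ Subgroup.zpowers a := by
    intro x e hx he
    have h4 : x ^ 4 ∈ Subgroup.zpowers a := by
      rw [← hidx]; exact Subgroup.pow_index_mem _ x
    have h2 : x ^ 2 ∈ Subgroup.zpowers a := by
      obtain ⟨k, -, hk⟩ := hmem _ h4
      refine key (x ^ 2) (e * e) k ?_ (by simp [Nat.mul_mod, he]) (by rw [← hk, ← pow_mul])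
      calc x ^ 2 * a * (x ^ 2)⁻¹ = x * (x * a * x⁻¹) * x⁻¹ := by rw [pow_two]; group
        _ = _ := by rw [hx, ← conj_pow, hx, ← pow_mul]
    obtain ⟨k, -, hk⟩ := hmem _ h2
    exact key x e k hx he hk
  have hK3 : ∀ x : G, x ∉ Subgroup.zpowers a → ∃ e : ℕ, x * a * x⁻¹ = a ^ e ∧ e % 4 = 3 := by
    intro x hx
    obtain ⟨e, -, he, h⟩ := hconj x
    refine ⟨e, h, ?_⟩
    by_contra hc
    exact hx (hK x e h (by omega))
  have hne : ∃ t, t ∉ Subgroup.zpowers a := by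
    by_contra! hc
    have := Subgroup.index_eq_one.2 ((Subgroup.eq_top_iff' _).2 hc)
    omega
  obtain ⟨t, ht⟩ := hne
  have : (Subgroup.zpowers a).index = 2 := by
    rw [Subgroup.index_eq_two_iff]
    refine ⟨t, fun b => ?_⟩
    by_cases hb : b ∈ Subgroup.zpowers a
    · exact Or.inr ⟨hb, fun h => ht ((Subgroup.mul_mem_cancel_left _ hb).1 h)⟩
    · refine Or.inl ⟨?_, hb⟩
      obtain ⟨e, h, he⟩ := hK3 t ht
      obtain ⟨f, h', hf⟩ := hK3 b hb
      refine hK (b * t) (f * e) ?_ (by simp [Nat.mul_mod, he, hf])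
      calc b * t * a * (b * t)⁻¹ = b * (t * a * t⁻¹) * b⁻¹ := by group
        _ = _ := by rw [h, ← conj_pow, h', ← pow_mul]
  omega

/-- There is no finite group `G` of order 32 such that `π_e(G) = {1, 2, 4, 8}` and `G`
has exactly one cyclic subgroup of order 8. -/
theorem no_group_of_order_32_with_unique_cyclic_subgroup_of_order_eight :
    ∀ (G : Type) [Group G] [Finite G], Nat.card G = 32 →
      {n : ℕ | ∃ g : G, orderOf g = n} = ({1, 2, 4, 8} : Set ℕ) →
      {H : Subgroup G | IsCyclic H ∧ Nat.card H = 8}.ncard ≠ 1 := by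
  intro G _ _ hG hpi hone
  obtain ⟨C, hC⟩ := Set.ncard_eq_one.1 hone
  have h8 : ∀ g : G, g ^ 8 = 1 := by
    intro g
    have : orderOf g ∈ ({1, 2, 4, 8} : Set ℕ) := hpi ▸ ⟨g, rfl⟩
    rw [← orderOf_dvd_iff_pow_eq_one]
    simp only [Set.mem_insert_iff, Set.mem_singleton_iff] at this
    rcases this with h | h | h | h <;> rw [h] <;> norm_num
  have hz : ∀ g : G, orderOf g = 8 → Subgroup.zpowers g = C := by
    intro g hg
    have : Subgroup.zpowers g ∈ {H : Subgroup G | IsCyclic H ∧ Nat.card H = 8} :=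
      ⟨inferInstance, by rw [Nat.card_zpowers, hg]⟩
    rw [hC] at this
    exact this
  obtain ⟨a, ha⟩ : 8 ∈ {n : ℕ | ∃ g : G, orderOf g = n} := by rw [hpi]; simp
  refine aux_main_s14 hG a ha h8 fun g hg => ?_
  rw [hz a ha, ← hz g hg]
  exact Subgroup.mem_zpowers g
end

section
/- Let G be a finite group with π_e(G) = {1, 2, 4, 8} having exactly one cyclic subgroup of order 8, and let g ∈ G be an element of order 8. Then the centralizer of g in G equals ⟨g⟩, i.e., C_G(g) = ⟨g⟩. -/
/-- Let `G` be a finite group with `π_e(G) = {1, 2, 4, 8}` having exactly one cyclic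
subgroup of order 8, and let `g ∈ G` be an element of order 8. Then `C_G(g) = ⟨g⟩`. -/
theorem centralizer_eq_zpowers_of_unique_cyclic_subgroup_of_order_eight
    (G : Type) [Group G] [Finite G]
    (horders : {n : ℕ | ∃ g : G, orderOf g = n} = ({1, 2, 4, 8} : Set ℕ))
    (hunique : {H : Subgroup G | IsCyclic H ∧ Nat.card H = 8}.ncard = 1)
    (g : G) (hg : orderOf g = 8) :
    Subgroup.centralizer {g} = Subgroup.zpowers g := by
  obtain ⟨K, hK⟩ := Set.ncard_eq_one.mp hunique
  have key : ∀ x : G, orderOf x = 8 → Subgroup.zpowers x = K := by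
    intro x hx
    have h : Subgroup.zpowers x ∈ {H : Subgroup G | IsCyclic H ∧ Nat.card H = 8} :=
      ⟨inferInstance, by rw [Nat.card_zpowers, hx]⟩
    rw [hK] at h
    exact h
  have mem8 : ∀ x : G, orderOf x = 8 → x ∈ Subgroup.zpowers g := by
    intro x hx
    rw [key g hg, ← key x hx]
    exact Subgroup.mem_zpowers x
  apply le_antisymm
  · intro h hh
    have hc : Commute g h := Subgroup.mem_centralizer_singleton_iff.mp hh |>.symm
    have ho : orderOf h ∈ ({1, 2, 4, 8} : Set ℕ) := by
      rw [← horders]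
      exact ⟨h, rfl⟩
    by_cases h8 : orderOf h = 8
    · exact mem8 h h8
    · have h4 : h ^ 4 = 1 := by
        apply orderOf_dvd_iff_pow_eq_one.mp
        simp only [Set.mem_insert_iff, Set.mem_singleton_iff] at ho
        rcases ho with e | e | e | e
        · rw [e]; norm_num
        · rw [e]; norm_num
        · rw [e]
        · exact absurd e h8
      have h88 : h ^ 8 = 1 := by
        rw [show 8 = 4 * 2 from rfl, pow_mul, h4, one_pow]
      have e8 : orderOf (g * h) = 2 ^ (2 + 1) := by
        apply orderOf_eq_prime_pow
        · rw [hc.mul_pow]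
          norm_num
          rw [h4, mul_one]
          intro e
          have := orderOf_dvd_of_pow_eq_one e
          rw [hg] at this
          omega
        · rw [hc.mul_pow]
          norm_num
          rw [h88, mul_one, ← hg, pow_orderOf_eq_one]
      have := mem8 (g * h) (by rw [e8]; norm_num)
      exact (Subgroup.mul_mem_cancel_left _ (Subgroup.mem_zpowers g)).mp this
  · rw [Subgroup.zpowers_le]
    exact Subgroup.mem_centralizer_singleton_iff.mpr rfl
end
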